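/- Suppose 1 < p < ∞, let p' be the conjugate exponent of p, and let g be holomorphic on the unit disc D. Then the Volterra operator T_g maps the Besov space B^p into Q_1 (= BMOA) if and only if g ∈ Q_{1,log,1/p'}. -/

import Mathlib

open MeasureTheory Metric Complex Real Filter Set

noncomputable section

/-- `f` is holomorphic on the open unit disc. -/
def HolOn (f : ℂ → ℂ) : Prop := DifferentiableOn ℂ f (Metric.ball (0:ℂ) 1)

/-- The normalized Lebesgue area measure on `ℂ` (so the unit disc has total mass 1). -/
def dA : Measure ℂ := (ENNReal.ofReal π)⁻¹ • volume

/-- Bounded holomorphic functions on the unit disc. -/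
def Hinf : Set (ℂ → ℂ) :=
  {f | HolOn f ∧ ∃ C : ℝ, ∀ z ∈ Metric.ball (0:ℂ) 1, ‖f z‖ ≤ C}

/-- The Bloch space. -/
def Bloch : Set (ℂ → ℂ) :=
  {f | HolOn f ∧ ∃ C : ℝ, ∀ z ∈ Metric.ball (0:ℂ) 1,
      (1 - ‖z‖ ^ 2) * ‖deriv f z‖ ≤ C}

/-- The little Bloch space: `(1-|z|²)|f'(z)| → 0` as `|z| → 1⁻`. -/
def littleBloch : Set (ℂ → ℂ) :=
  {f | HolOn f ∧ ∀ ε : ℝ, 0 < ε → ∃ r : ℝ, r < 1 ∧ ∀ z ∈ Metric.ball (0:ℂ) 1,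
      r < ‖z‖ → (1 - ‖z‖ ^ 2) * ‖deriv f z‖ < ε}

/-- The `α`-logarithmic Bloch space. -/
def BlochLog (α : ℝ) : Set (ℂ → ℂ) :=
  {f | HolOn f ∧ ∃ C : ℝ, ∀ z ∈ Metric.ball (0:ℂ) 1,
      (1 - ‖z‖ ^ 2) * (Real.log (2 / (1 - ‖z‖ ^ 2))) ^ α *
        ‖deriv f z‖ ≤ C}

/-- The Besov space `B¹`: holomorphic `f` with `∫_D |f''| dA < ∞`. -/
def Besov1 : Set (ℂ → ℂ) :=
  {f | HolOn f ∧ ∫⁻ z in Metric.ball (0:ℂ) 1,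
      ENNReal.ofReal (‖deriv (deriv f) z‖) ∂dA < ⊤}

/-- The Besov space `Bᵖ` (`1 < p < ∞`): `∫_D (1-|z|)^(p-2) |f'(z)|^p dA(z) < ∞`. -/
def Besov (p : ℝ) : Set (ℂ → ℂ) :=
  {f | HolOn f ∧ ∫⁻ z in Metric.ball (0:ℂ) 1,
      ENNReal.ofReal ((1 - ‖z‖) ^ (p - 2) * ‖deriv f z‖ ^ p) ∂dA < ⊤}

open scoped Classical in
/-- The Besov space `Bᵖ` for all `1 ≤ p < ∞` (with the special definition at `p = 1`). -/
def BesovFull (p : ℝ) : Set (ℂ → ℂ) := if p = 1 then Besov1 else Besov p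

/-- The Möbius transformation `φ_a(z) = (a-z)/(1 - conj a · z)`. -/
def phi (a z : ℂ) : ℂ := (a - z) / (1 - (starRingEnd ℂ) a * z)

/-- The space `Q_s`. -/
def Qs (s : ℝ) : Set (ℂ → ℂ) :=
  {f | HolOn f ∧ ⨆ a ∈ Metric.ball (0:ℂ) 1, ∫⁻ z in Metric.ball (0:ℂ) 1,
      ENNReal.ofReal (‖deriv f z‖ ^ 2 *
        (1 - ‖phi a z‖ ^ 2) ^ s) ∂dA < ⊤}

/-- The space `Q_{s,log,α}`. -/
def QsLog (s α : ℝ) : Set (ℂ → ℂ) :=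
  {f | HolOn f ∧ ⨆ a ∈ Metric.ball (0:ℂ) 1,
      (ENNReal.ofReal ((Real.log (2 / (1 - ‖a‖))) ^ (2 * α)) *
        ∫⁻ z in Metric.ball (0:ℂ) 1,
          ENNReal.ofReal (‖deriv f z‖ ^ 2 *
            (1 - ‖phi a z‖ ^ 2) ^ s) ∂dA) < ⊤}

/-- The Volterra operator `T_g(f)(z) = ∫_0^z g'(ξ) f(ξ) dξ` (along the segment from 0 to z). -/
def Tg (g f : ℂ → ℂ) : ℂ → ℂ :=
  fun z => z * ∫ t in (0:ℝ)..1, deriv g ((t : ℂ) * z) * f ((t : ℂ) * z)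

/-- The companion operator `I_g(f)(z) = ∫_0^z g(ξ) f'(ξ) dξ` (along the segment from 0 to z). -/
def Ig (g f : ℂ → ℂ) : ℂ → ℂ :=
  fun z => z * ∫ t in (0:ℝ)..1, g ((t : ℂ) * z) * deriv f ((t : ℂ) * z)

/-- The multiplication operator `M_g(f) = g · f`. -/
def Mg (g f : ℂ → ℂ) : ℂ → ℂ := fun z => g z * f z

/-- `T` maps `X` into `Y`. -/
def MapsInto (T : (ℂ → ℂ) → (ℂ → ℂ)) (X Y : Set (ℂ → ℂ)) : Prop :=
  ∀ f ∈ X, T f ∈ Y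

/-- The Hardy space `H^q`. -/
def Hardy (q : ℝ) : Set (ℂ → ℂ) :=
  {f | HolOn f ∧ ∃ C : ℝ, ∀ r : ℝ, 0 < r → r < 1 →
      (1 / (2 * π)) * ∫ t in (0:ℝ)..(2 * π),
        ‖f ((r : ℂ) * Complex.exp ((t : ℂ) * Complex.I))‖ ^ q ≤ C}

/-- An inner function: bounded holomorphic with radial boundary values of modulus 1 a.e. -/
def IsInner (g : ℂ → ℂ) : Prop :=
  g ∈ Hinf ∧ ∀ᵐ t : ℝ ∂(volume.restrict (Set.Ioc (0:ℝ) (2 * π))),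
    Filter.Tendsto (fun r : ℝ => ‖g ((r : ℂ) * Complex.exp ((t : ℂ) * Complex.I))‖)
      (nhdsWithin 1 (Set.Iio 1)) (nhds 1)

/-- `X` has the f-property (division by inner functions). -/
def FProperty (X : Set (ℂ → ℂ)) : Prop :=
  ∀ h ∈ X, ∀ g : ℂ → ℂ, IsInner g →
    (fun z => h z / g z) ∈ Hardy 1 → (fun z => h z / g z) ∈ X

/-- The space of multipliers `M(X,Y)`. -/
def Mult (X Y : Set (ℂ → ℂ)) : Set (ℂ → ℂ) :=
  {g | HolOn g ∧ ∀ f ∈ X, (fun z => g z * f z) ∈ Y}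

end

/-!
Let `dμ_a = |g'|² (1 - |φ_a|²)^s dA`. Since `(T_g f)' = g' f`, membership of `T_g f` in `Q_s` says
that `∫ |f|² dμ_a` is bounded uniformly in `a`.

Sufficiency: split `f = f(a) + (f - f(a))`. The sub-mean value property of `|f'|` and Hölder's
inequality along the radius through `a` give `|f(a)| ≤ C log(2/(1-|a|))^(1/p')`, which the
logarithmic weight absorbs. In the integral of `f - f(a)`, composition with `φ_a` moves `a` to `0`
and permutes the measures `μ_b`. Their total masses being bounded, `μ_0` is an `s`-Carleson measure,
and bounding `f - f(0)` by the integral of `f'` over a Stolz region and exchanging the order of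
integration embeds `B^q`, `q = max p 2`, into `L^q(μ_0)`.

Necessity: the functions `log(1/(1 - āz)) / log(2/(1-|a|))^(1/p)` are bounded in `B^p` and have size
`log(2/(1-|a|))^(1/p')` near the boundary point `a/|a|`; away from it the kernel
`(1 - |φ_a|²)^s` compensates the logarithm, and `μ_a` is controlled by `μ_0`. To bound
`∫ |f|² dμ_a` uniformly over these functions, the uniform boundedness principle is applied to their
`ℓ¹`-superpositions: the parameter space `ℓ¹` is complete, so completeness of `B^p` is not needed.
-/

open scoped ComplexConjugate ENNReal NNReal

local notation "𝔻" => ball (0 : ℂ) 1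

/-! ### Möbius transformations of the disc -/

theorem one_sub_conj_mul_ne_zero {a z : ℂ} (ha : a ∈ 𝔻) (hz : z ∈ 𝔻) :
    1 - conj a * z ≠ 0 := by
  rw [mem_ball_zero_iff] at ha hz
  intro h
  have h1 : ‖a‖ * ‖z‖ = 1 := by
    simpa only [norm_mul, RCLike.norm_conj, norm_one] using
      congrArg norm (sub_eq_zero.mp h).symm
  nlinarith [norm_nonneg a, norm_nonneg z]

theorem norm_one_sub_conj_mul_pos {a z : ℂ} (ha : a ∈ 𝔻) (hz : z ∈ 𝔻) :
    0 < ‖1 - conj a * z‖ :=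
  norm_pos_iff.mpr (one_sub_conj_mul_ne_zero ha hz)

theorem norm_one_sub_conj_mul_comm (a z : ℂ) : ‖1 - conj a * z‖ = ‖1 - conj z * a‖ := by
  rw [← Complex.norm_conj]
  simp only [map_sub, map_one, map_mul, conj_conj, mul_comm]

theorem one_sub_norm_pos {z : ℂ} (hz : z ∈ 𝔻) : 0 < 1 - ‖z‖ :=
  sub_pos.mpr (mem_ball_zero_iff.mp hz)

theorem one_sub_norm_le_one_sub_norm_sq {z : ℂ} (hz : z ∈ 𝔻) : 1 - ‖z‖ ≤ 1 - ‖z‖ ^ 2 := by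
  nlinarith [one_sub_norm_pos hz, norm_nonneg z]

theorem one_sub_norm_sq_le_two_mul {z : ℂ} (hz : z ∈ 𝔻) : 1 - ‖z‖ ^ 2 ≤ 2 * (1 - ‖z‖) := by
  nlinarith [one_sub_norm_pos hz, norm_nonneg z]

theorem one_sub_norm_sq_pos {z : ℂ} (hz : z ∈ 𝔻) : 0 < 1 - ‖z‖ ^ 2 :=
  (one_sub_norm_pos hz).trans_le (one_sub_norm_le_one_sub_norm_sq hz)

theorem norm_one_sub_conj_mul_self {a : ℂ} (ha : a ∈ 𝔻) : ‖1 - conj a * a‖ = 1 - ‖a‖ ^ 2 := by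
  have h : 1 - conj a * a = ((1 - ‖a‖ ^ 2 : ℝ) : ℂ) := by
    rw [← Complex.normSq_eq_conj_mul_self, Complex.normSq_eq_norm_sq]
    push_cast
    ring
  rw [h, Complex.norm_real, Real.norm_of_nonneg (one_sub_norm_sq_pos ha).le]

theorem phi_zero_right (a : ℂ) : phi a 0 = a := by simp [phi]

theorem norm_phi_zero_left (z : ℂ) : ‖phi 0 z‖ = ‖z‖ := by simp [phi]

theorem one_sub_norm_phi_sq {a z : ℂ} (ha : a ∈ 𝔻) (hz : z ∈ 𝔻) :
    1 - ‖phi a z‖ ^ 2 = (1 - ‖a‖ ^ 2) * (1 - ‖z‖ ^ 2) / ‖1 - conj a * z‖ ^ 2 := by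
  have h : ‖1 - conj a * z‖ ^ 2 ≠ 0 := (pow_pos (norm_one_sub_conj_mul_pos ha hz) 2).ne'
  rw [phi, norm_div, div_pow, eq_div_iff h, sub_mul, div_mul_cancel₀ _ h]
  simp only [← Complex.normSq_eq_norm_sq, Complex.normSq_apply, sub_re, sub_im, one_re, one_im,
    mul_re, mul_im, conj_re, conj_im]
  ring

theorem phi_mem_ball {a z : ℂ} (ha : a ∈ 𝔻) (hz : z ∈ 𝔻) : phi a z ∈ 𝔻 := by
  have h : 0 < 1 - ‖phi a z‖ ^ 2 := by
    rw [one_sub_norm_phi_sq ha hz]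
    exact div_pos (mul_pos (one_sub_norm_sq_pos ha) (one_sub_norm_sq_pos hz))
      (pow_pos (norm_one_sub_conj_mul_pos ha hz) 2)
  rw [mem_ball_zero_iff]
  nlinarith [norm_nonneg (phi a z)]

theorem phi_phi {a z : ℂ} (ha : a ∈ 𝔻) (hz : z ∈ 𝔻) : phi a (phi a z) = z := by
  have h : phi a z * (1 - conj a * z) = a - z :=
    div_mul_cancel₀ _ (one_sub_conj_mul_ne_zero ha hz)
  rw [phi, div_eq_iff (one_sub_conj_mul_ne_zero ha (phi_mem_ball ha hz))]
  linear_combination -h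

theorem image_phi_ball {a : ℂ} (ha : a ∈ 𝔻) : phi a '' 𝔻 = 𝔻 :=
  Subset.antisymm (image_subset_iff.mpr fun _ hz => phi_mem_ball ha hz)
    fun w hw => ⟨phi a w, phi_mem_ball ha hw, phi_phi ha hw⟩

theorem injOn_phi {a : ℂ} (ha : a ∈ 𝔻) : InjOn (phi a) 𝔻 :=
  LeftInvOn.injOn fun _ hz => phi_phi ha hz

theorem hasDerivAt_one_sub_conj_mul (a z : ℂ) :
    HasDerivAt (fun z : ℂ => 1 - conj a * z) (-conj a) z := by
  simpa only [id_eq, mul_one] using ((hasDerivAt_id z).const_mul (conj a)).const_sub 1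

theorem hasDerivAt_phi {a z : ℂ} (ha : a ∈ 𝔻) (hz : z ∈ 𝔻) :
    HasDerivAt (phi a) (-(1 - conj a * a) / (1 - conj a * z) ^ 2) z := by
  have hnum : HasDerivAt (fun z : ℂ => a - z) (-1) z := (hasDerivAt_id z).const_sub a
  have hdiv := hnum.div (hasDerivAt_one_sub_conj_mul a z) (one_sub_conj_mul_ne_zero ha hz)
  exact hdiv.congr_deriv (by ring)

theorem differentiableOn_phi {a : ℂ} (ha : a ∈ 𝔻) : DifferentiableOn ℂ (phi a) 𝔻 :=
  fun _ hz => (hasDerivAt_phi ha hz).differentiableAt.differentiableWithinAt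

theorem norm_deriv_phi_mul {a z : ℂ} (ha : a ∈ 𝔻) (hz : z ∈ 𝔻) :
    ‖deriv (phi a) z‖ * (1 - ‖z‖ ^ 2) = 1 - ‖phi a z‖ ^ 2 := by
  rw [(hasDerivAt_phi ha hz).deriv, one_sub_norm_phi_sq ha hz, norm_div, norm_neg, norm_pow,
    norm_one_sub_conj_mul_self ha, div_mul_eq_mul_div]

theorem one_sub_conj_phi_mul_phi {a b z : ℂ} (ha : a ∈ 𝔻) (hb : b ∈ 𝔻) (hz : z ∈ 𝔻) :
    1 - conj (phi a b) * phi a z =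
      (1 - conj a * a) * (1 - conj b * z) / ((1 - conj b * a) * (1 - conj a * z)) := by
  have hba := one_sub_conj_mul_ne_zero hb ha
  have haz := one_sub_conj_mul_ne_zero ha hz
  have : 1 - a * conj b ≠ 0 := by rwa [mul_comm]
  simp only [phi, map_div₀, map_sub, map_one, map_mul, Complex.conj_conj]
  field_simp
  ring

theorem one_sub_norm_phi_phi_sq {a b z : ℂ} (ha : a ∈ 𝔻) (hb : b ∈ 𝔻) (hz : z ∈ 𝔻) :
    1 - ‖phi (phi a b) (phi a z)‖ ^ 2 = 1 - ‖phi b z‖ ^ 2 := by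
  have hpa := (one_sub_norm_sq_pos ha).ne'
  have hab := norm_one_sub_conj_mul_pos ha hb
  have haz := norm_one_sub_conj_mul_pos ha hz
  have := norm_one_sub_conj_mul_pos hb hz
  rw [one_sub_norm_phi_sq (phi_mem_ball ha hb) (phi_mem_ball ha hz), one_sub_norm_phi_sq ha hb,
    one_sub_norm_phi_sq ha hz, one_sub_norm_phi_sq hb hz, one_sub_conj_phi_mul_phi ha hb hz,
    norm_div, norm_mul, norm_mul, norm_one_sub_conj_mul_self ha, norm_one_sub_conj_mul_comm b a]
  field_simp

theorem setLIntegral_dA (s : Set ℂ) (h : ℂ → ℝ≥0∞) :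
    ∫⁻ z in s, h z ∂dA = (ENNReal.ofReal π)⁻¹ * ∫⁻ z in s, h z := by
  rw [dA, Measure.restrict_smul, lintegral_smul_measure, smul_eq_mul]

theorem det_restrictScalars_toSpanSingleton (c : ℂ) :
    ((ContinuousLinearMap.toSpanSingleton ℂ c).restrictScalars ℝ).det = ‖c‖ ^ 2 := by
  rw [ContinuousLinearMap.det, ← LinearMap.det_toMatrix Complex.basisOneI, Matrix.det_fin_two]
  simp [LinearMap.toMatrix_apply, ← Complex.normSq_eq_norm_sq, Complex.normSq_apply]

theorem lintegral_image_dA_eq_lintegral_norm_deriv_sq_mul {φ φ' : ℂ → ℂ} {s : Set ℂ}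
    (hs : MeasurableSet s) (hφ : ∀ z ∈ s, HasDerivWithinAt φ (φ' z) s z) (hinj : InjOn φ s)
    (h : ℂ → ℝ≥0∞) :
    ∫⁻ w in φ '' s, h w ∂dA = ∫⁻ z in s, ENNReal.ofReal (‖φ' z‖ ^ 2) * h (φ z) ∂dA := by
  rw [setLIntegral_dA, setLIntegral_dA, lintegral_image_eq_lintegral_abs_det_fderiv_mul volume hs
    (fun z hz => (hφ z hz).hasFDerivWithinAt.restrictScalars ℝ) hinj]
  simp only [det_restrictScalars_toSpanSingleton, abs_pow, abs_norm]

theorem lintegral_norm_deriv_phi_sq_mul_comp_phi {a : ℂ} (ha : a ∈ 𝔻) (h : ℂ → ℝ≥0∞) :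
    ∫⁻ z in 𝔻, ENNReal.ofReal (‖deriv (phi a) z‖ ^ 2) * h (phi a z) ∂dA =
      ∫⁻ z in 𝔻, h z ∂dA := by
  rw [← lintegral_image_dA_eq_lintegral_norm_deriv_sq_mul measurableSet_ball
    (fun z hz => (hasDerivAt_phi ha hz).differentiableAt.hasDerivAt.hasDerivWithinAt)
    (injOn_phi ha), image_phi_ball ha]

/-! ### Sub-mean value inequalities -/

theorem setLIntegral_ball_eq_polar {F : ℂ → ℝ≥0∞} {c : ℂ} {r : ℝ} (hF : ContinuousOn F (ball c r)) :
    ∫⁻ z in ball c r, F z =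
      ∫⁻ ρ in Ioo 0 r, ∫⁻ θ in Ioo (-π) π, ENNReal.ofReal ρ * F (circleMap c ρ θ) := by
  have hsymm (p : ℝ × ℝ) : c + Complex.polarCoord.symm p = circleMap c p.1 p.2 := by
    rw [Complex.polarCoord_symm_apply, circleMap, Complex.exp_mul_I, ofReal_cos, ofReal_sin]
  have hmem {p : ℝ × ℝ} (hp : 0 < p.1) : circleMap c p.1 p.2 ∈ ball c r ↔ p.1 < r := by
    rw [mem_ball, dist_eq_norm, circleMap_sub_center, norm_circleMap_zero, abs_of_pos hp]
  have hcont : ContinuousOn (fun p : ℝ × ℝ => ENNReal.ofReal p.1 * F (circleMap c p.1 p.2))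
      (Ioo 0 r ×ˢ Ioo (-π) π) := by
    refine (ENNReal.continuous_ofReal.comp continuous_fst).continuousOn.ennreal_mul
      (hF.comp (Continuous.continuousOn ?_) fun p hp => (hmem hp.1.1).mpr hp.1.2)
      (fun p hp => Or.inl (ENNReal.ofReal_pos.mpr hp.1.1).ne')
      (fun p _ => Or.inr ENNReal.ofReal_ne_top)
    simp only [circleMap]
    fun_prop
  calc ∫⁻ z in ball c r, F z = ∫⁻ u, (ball c r).indicator F (c + u) := by
        rw [← lintegral_indicator measurableSet_ball, lintegral_add_left_eq_self]
    _ = ∫⁻ p in Ioi 0 ×ˢ Ioo (-π) π, (Iio r ×ˢ univ).indicator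
          (fun p => ENNReal.ofReal p.1 * F (circleMap c p.1 p.2)) p := by
        rw [← Complex.lintegral_comp_polarCoord_symm]
        refine setLIntegral_congr_fun (measurableSet_Ioi.prod measurableSet_Ioo) fun p hp => ?_
        by_cases hpr : p.1 < r
        · rw [hsymm, indicator_of_mem ((hmem hp.1).mpr hpr),
            indicator_of_mem (mk_mem_prod (mem_Iio.mpr hpr) (mem_univ p.2)), smul_eq_mul]
        · rw [hsymm, indicator_of_notMem (mt (hmem hp.1).mp hpr),
            indicator_of_notMem fun h => hpr h.1, smul_zero]
    _ = ∫⁻ p in Ioo 0 r ×ˢ Ioo (-π) π, ENNReal.ofReal p.1 * F (circleMap c p.1 p.2) := by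
        rw [setLIntegral_indicator (measurableSet_Iio.prod MeasurableSet.univ), prod_inter_prod,
          univ_inter, inter_comm, Ioi_inter_Iio]
    _ = _ := setLIntegral_prod _ (hcont.aemeasurable (measurableSet_Ioo.prod measurableSet_Ioo))

theorem circleAverage_eq_setAverage {E : Type*} [NormedAddCommGroup E] [NormedSpace ℝ E]
    (f : ℂ → E) (c : ℂ) (r : ℝ) :
    circleAverage f c r = ⨍ θ in Ioo (-π) π, f (circleMap c r θ) := by
  rw [circleAverage_eq_integral_add (-π), intervalIntegral.integral_comp_add_right
    (fun θ => f (circleMap c r θ)), setAverage_eq,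
    Real.volume_real_Ioo_of_le (by linarith [pi_pos]),
    intervalIntegral.integral_of_le (by linarith [pi_pos]), integral_Ioc_eq_integral_Ioo]
  ring_nf

theorem convexOn_norm_rpow {E : Type*} [SeminormedAddCommGroup E] [NormedSpace ℝ E] {q : ℝ}
    (hq : 1 ≤ q) : ConvexOn ℝ univ fun x : E => ‖x‖ ^ q := by
  refine ⟨convex_univ, fun x _ y _ a b ha hb hab => ?_⟩
  calc ‖a • x + b • y‖ ^ q ≤ (a • ‖x‖ + b • ‖y‖) ^ q := by
        gcongr
        exact convexOn_univ_norm.2 (mem_univ x) (mem_univ y) ha hb hab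
    _ ≤ a • ‖x‖ ^ q + b • ‖y‖ ^ q :=
        (convexOn_rpow hq).2 (norm_nonneg x) (norm_nonneg y) ha hb hab

theorem norm_rpow_le_circleAverage {h : ℂ → ℂ} {c : ℂ} {r : ℝ} (hr : 0 < r)
    (hh : DifferentiableOn ℂ h (closedBall c r)) {q : ℝ} (hq : 1 ≤ q) :
    ‖h c‖ ^ q ≤ circleAverage (fun z => ‖h z‖ ^ q) c r := by
  have hcont : Continuous fun θ => h (circleMap c r θ) :=
    hh.continuousOn.comp_continuous (continuous_circleMap c r)
      fun θ => circleMap_mem_closedBall c hr.le θ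
  have hnorm : Continuous fun x : ℂ => ‖x‖ ^ q :=
    continuous_norm.rpow_const fun _ => Or.inr (by linarith)
  have hmean : h c = ⨍ θ in Ioo (-π) π, h (circleMap c r θ) := by
    rw [← circleAverage_eq_setAverage, DiffContOnCl.circleAverage]
    rw [abs_of_pos hr]
    exact DifferentiableOn.diffContOnCl (by rwa [closure_ball c hr.ne'])
  rw [hmean, circleAverage_eq_setAverage]
  refine ConvexOn.map_set_average_le (convexOn_norm_rpow hq) hnorm.continuousOn isClosed_univ
    ?_ measure_Ioo_lt_top.ne (Eventually.of_forall fun _ => mem_univ _)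
    (hcont.integrableOn_Icc.mono_set Ioo_subset_Icc_self)
    ((hnorm.comp hcont).integrableOn_Icc.mono_set Ioo_subset_Icc_self)
  simp [pi_pos]

theorem lintegral_norm_rpow_le_lintegral_circleMap {h : ℂ → ℂ} {c : ℂ} {r : ℝ} (hr : 0 < r)
    (hh : DifferentiableOn ℂ h (closedBall c r)) {q : ℝ} (hq : 1 ≤ q) :
    ∫⁻ _ in Ioo (-π) π, ENNReal.ofReal (‖h c‖ ^ q) ≤
      ∫⁻ θ in Ioo (-π) π, ENNReal.ofReal (‖h (circleMap c r θ)‖ ^ q) := by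
  have hint : IntegrableOn (fun θ => ‖h (circleMap c r θ)‖ ^ q) (Ioo (-π) π) :=
    ((hh.continuousOn.comp_continuous (continuous_circleMap c r) fun θ =>
      circleMap_mem_closedBall c hr.le θ).norm.rpow_const fun _ =>
        Or.inr (by linarith)).integrableOn_Icc.mono_set Ioo_subset_Icc_self
  have hmean := norm_rpow_le_circleAverage hr hh hq
  have hvol : 0 < volume.real (Ioo (-π) π) := by simp [pi_pos]
  rw [circleAverage_eq_setAverage, setAverage_eq, smul_eq_mul, inv_mul_eq_div,
    le_div_iff₀ hvol] at hmean
  rw [setLIntegral_const, ← ofReal_integral_eq_lintegral_ofReal hint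
    (Eventually.of_forall fun θ => by positivity), ← ofReal_measureReal measure_Ioo_lt_top.ne,
    ← ENNReal.ofReal_mul (by positivity)]
  exact ENNReal.ofReal_le_ofReal hmean

theorem dA_ball (c : ℂ) {r : ℝ} (hr : 0 ≤ r) : dA (ball c r) = ENNReal.ofReal (r ^ 2) := by
  have hpi : ((NNReal.pi : ℝ≥0) : ℝ≥0∞) = ENNReal.ofReal π := by
    rw [← NNReal.coe_real_pi, ENNReal.ofReal_coe_nnreal]
  rw [dA, Measure.smul_apply, Complex.volume_ball, smul_eq_mul, mul_comm, mul_assoc, hpi,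
    ENNReal.mul_inv_cancel (ENNReal.ofReal_pos.mpr pi_pos).ne' ENNReal.ofReal_ne_top, mul_one,
    ENNReal.ofReal_pow hr]

theorem norm_rpow_mul_sq_le_lintegral_ball {h : ℂ → ℂ} {c : ℂ} {r : ℝ} (hr : 0 ≤ r)
    (hh : DifferentiableOn ℂ h (ball c r)) {q : ℝ} (hq : 1 ≤ q) :
    ENNReal.ofReal (‖h c‖ ^ q) * ENNReal.ofReal (r ^ 2) ≤
      ∫⁻ w in ball c r, ENNReal.ofReal (‖h w‖ ^ q) ∂dA := by
  have hcont : ContinuousOn (fun w => ENNReal.ofReal (‖h w‖ ^ q)) (ball c r) :=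
    ENNReal.continuous_ofReal.comp_continuousOn
      (hh.continuousOn.norm.rpow_const fun _ _ => Or.inr (by linarith))
  rw [← dA_ball c hr, ← setLIntegral_const, setLIntegral_dA, setLIntegral_dA,
    setLIntegral_ball_eq_polar continuousOn_const, setLIntegral_ball_eq_polar hcont]
  refine mul_le_mul_right (setLIntegral_mono' measurableSet_Ioo fun ρ hρ => ?_) _
  rw [lintegral_const_mul' _ _ ENNReal.ofReal_ne_top,
    lintegral_const_mul' _ _ ENNReal.ofReal_ne_top]
  exact mul_le_mul_right (lintegral_norm_rpow_le_lintegral_circleMap hρ.1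
    (hh.mono (closedBall_subset_ball hρ.2)) hq) _

/-! ### Radii and Stolz regions -/

instance : SFinite dA := inferInstanceAs (SFinite ((ENNReal.ofReal π)⁻¹ • volume))

/-- The approach region with vertex `z`. For `‖z‖ = 1` this is the Stolz region
`‖z - w‖ ≤ 5 (1 - ‖w‖)`; for `‖z‖ < 1` it is such a region truncated near `z`. -/
def stolzRegion (z : ℂ) : Set ℂ := {w | ‖1 - conj w * z‖ ≤ 5 * (1 - ‖w‖)}

theorem isClosed_setOf_mem_stolzRegion : IsClosed {x : ℂ × ℂ | x.2 ∈ stolzRegion x.1} := by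
  have := Complex.continuous_conj
  have hcont : Continuous fun x : ℂ × ℂ => ‖1 - conj x.2 * x.1‖ := by fun_prop
  exact isClosed_le hcont (by fun_prop)

theorem measurableSet_stolzRegion (z : ℂ) : MeasurableSet (stolzRegion z) :=
  (isClosed_setOf_mem_stolzRegion.preimage (Continuous.prodMk_right z)).measurableSet

theorem rpow_le_two_rpow_abs_mul_rpow {A B : ℝ} (k : ℝ) (hA : 0 < A) (hB : 0 < B)
    (hAB : A ≤ 2 * B) (hBA : B ≤ 2 * A) : A ^ k ≤ 2 ^ |k| * B ^ k := by
  rcases le_total 0 k with hk | hk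
  · rw [abs_of_nonneg hk, ← Real.mul_rpow zero_le_two hB.le]
    exact Real.rpow_le_rpow hA.le hAB hk
  · rw [abs_of_nonpos hk, Real.rpow_neg zero_le_two, ← Real.inv_rpow zero_le_two,
      ← Real.mul_rpow (by norm_num) hB.le]
    exact Real.rpow_le_rpow_of_nonpos (by positivity) (by linarith) hk

section Radial

variable {ζ : ℂ} (hζ : ‖ζ‖ = 1) {s R : ℝ} {w : ℂ}

include hζ

theorem abs_norm_sub_lt_of_mem_ball {r : ℝ} (hs : 0 ≤ s) (hw : w ∈ ball (s * ζ) r) :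
    |‖w‖ - s| < r := by
  have h := abs_norm_sub_norm_le w (s * ζ)
  rw [norm_mul, hζ, mul_one, Complex.norm_of_nonneg hs] at h
  exact h.trans_lt (mem_ball_iff_norm.mp hw)

theorem ball_subset_unitBall (hs : 0 ≤ s) (hs1 : s < 1) :
    ball (s * ζ) ((1 - s) / 2) ⊆ 𝔻 := fun w hw => by
  rw [mem_ball_zero_iff]
  linarith [(abs_lt.mp (abs_norm_sub_lt_of_mem_ball hζ hs hw)).2]

theorem mem_stolzRegion_of_mem_ball (hs : 0 ≤ s) (hsR : s ≤ R) (hR : R < 1)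
    (hw : w ∈ ball (s * ζ) ((1 - s) / 2)) : w ∈ stolzRegion (R * ζ) := by
  have hnorm := (abs_lt.mp (abs_norm_sub_lt_of_mem_ball hζ hs hw)).2
  have hR0 : 0 ≤ R := hs.trans hsR
  have hsplit : 1 - conj w * (R * ζ) = ((1 - s * R : ℝ) : ℂ) - conj (w - s * ζ) * (R * ζ) := by
    have hζζ : conj ζ * ζ = 1 := by
      rw [← Complex.normSq_eq_conj_mul_self, Complex.normSq_eq_norm_sq, hζ, one_pow, ofReal_one]
    simp only [map_sub, map_mul, Complex.conj_ofReal]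
    push_cast
    linear_combination -(s * R : ℂ) * hζζ
  calc ‖1 - conj w * (R * ζ)‖ ≤ (1 - s * R) + ‖w - s * ζ‖ * R := by
        rw [hsplit]
        refine (norm_sub_le _ _).trans_eq ?_
        rw [Complex.norm_of_nonneg (by nlinarith), norm_mul, RCLike.norm_conj, norm_mul, hζ,
          Complex.norm_of_nonneg hR0, mul_one]
    _ ≤ 2 * (1 - s) + (1 - s) / 2 := by
        nlinarith [norm_nonneg (w - s * ζ), mem_ball_iff_norm.mp hw]
    _ ≤ 5 * (1 - ‖w‖) := by linarith

theorem rpow_mul_norm_rpow_le_lintegral_ball {h : ℂ → ℂ} (hh : DifferentiableOn ℂ h 𝔻) {q : ℝ}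
    (hq : 1 ≤ q) (e : ℝ) (hs : 0 ≤ s) (hs1 : s < 1) :
    ENNReal.ofReal ((1 - s) ^ e * ‖h (s * ζ)‖ ^ q) ≤ ENNReal.ofReal (4 * 2 ^ |e - 2|) *
      ∫⁻ w in ball (s * ζ) ((1 - s) / 2),
        ENNReal.ofReal ((1 - ‖w‖) ^ (e - 2) * ‖h w‖ ^ q) ∂dA := by
  have hs' : 0 < 1 - s := sub_pos.mpr hs1
  have hmean := norm_rpow_mul_sq_le_lintegral_ball (by linarith)
    (hh.mono (ball_subset_unitBall hζ hs hs1)) hq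
  calc ENNReal.ofReal ((1 - s) ^ e * ‖h (s * ζ)‖ ^ q)
      = ENNReal.ofReal (4 * (1 - s) ^ (e - 2)) *
        (ENNReal.ofReal (‖h (s * ζ)‖ ^ q) * ENNReal.ofReal (((1 - s) / 2) ^ 2)) := by
        rw [← ENNReal.ofReal_mul (by positivity), ← ENNReal.ofReal_mul (by positivity),
          Real.rpow_sub hs', Real.rpow_two]
        congr 1
        field_simp
        norm_num
    _ ≤ ENNReal.ofReal (4 * (1 - s) ^ (e - 2)) *
        ∫⁻ w in ball (s * ζ) ((1 - s) / 2), ENNReal.ofReal (‖h w‖ ^ q) ∂dA := by gcongr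
    _ ≤ _ := by
        rw [← lintegral_const_mul' _ _ ENNReal.ofReal_ne_top,
          ← lintegral_const_mul' _ _ ENNReal.ofReal_ne_top]
        refine setLIntegral_mono' measurableSet_ball fun w hw => ?_
        have hnorm := abs_lt.mp (abs_norm_sub_lt_of_mem_ball hζ hs hw)
        rw [← ENNReal.ofReal_mul (by positivity), ← ENNReal.ofReal_mul (by positivity),
          ← mul_assoc, mul_assoc 4 (2 ^ |e - 2|)]
        gcongr
        exact rpow_le_two_rpow_abs_mul_rpow _ hs' (by linarith) (by linarith) (by linarith)

theorem lintegral_lintegral_ball_le_lintegral_stolzRegion (hR : R < 1) {F : ℂ → ℝ≥0∞}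
    (hF : AEMeasurable F (dA.restrict 𝔻)) :
    ∫⁻ s in Ioo 0 R, ∫⁻ w in ball (s * ζ) ((1 - s) / 2), F w ∂dA ≤
      ∫⁻ w in 𝔻 ∩ stolzRegion (R * ζ), F w * ENNReal.ofReal (2 * (1 - ‖w‖)) ∂dA := by
  set A := 𝔻 ∩ stolzRegion (R * ζ)
  set S : Set (ℝ × ℂ) := {x | ‖x.2 - x.1 * ζ‖ < (1 - x.1) / 2}
  have hS : MeasurableSet S := (isOpen_lt (by fun_prop) (by fun_prop)).measurableSet
  have hA : MeasurableSet A := measurableSet_ball.inter (measurableSet_stolzRegion _)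
  calc ∫⁻ s in Ioo 0 R, ∫⁻ w in ball (s * ζ) ((1 - s) / 2), F w ∂dA
      = ∫⁻ s in Ioo 0 R, ∫⁻ w in A, S.indicator (fun x => F x.2) (s, w) ∂dA := by
        refine setLIntegral_congr_fun measurableSet_Ioo fun s hs => ?_
        have hball : ball (s * ζ) ((1 - s) / 2) ∩ A = ball (s * ζ) ((1 - s) / 2) :=
          inter_eq_left.mpr fun w hw => ⟨ball_subset_unitBall hζ hs.1.le (hs.2.trans hR) hw,
            mem_stolzRegion_of_mem_ball hζ hs.1.le hs.2.le hR hw⟩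
        rw [← hball, ← setLIntegral_indicator measurableSet_ball]
        refine lintegral_congr fun w => ?_
        simp only [indicator, S, mem_ball_iff_norm, mem_ofPred_eq]
    _ = ∫⁻ w in A, (∫⁻ s in Ioo 0 R, S.indicator (fun x => F x.2) (s, w)) ∂dA :=
        lintegral_lintegral_swap <| AEMeasurable.indicator
          (hF.mono_measure (Measure.restrict_mono_set _ inter_subset_left)).comp_snd hS
    _ ≤ ∫⁻ w in A, F w * ENNReal.ofReal (2 * (1 - ‖w‖)) ∂dA := by
        refine setLIntegral_mono' hA fun w _ => ?_
        rw [← Real.volume_ball ‖w‖, ← setLIntegral_const, ← lintegral_indicator measurableSet_ball,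
          ← lintegral_indicator measurableSet_Ioo]
        refine lintegral_mono (indicator_le fun s hs => indicator_apply_le' (fun hsw => ?_)
          fun _ => zero_le)
        have hnorm := abs_lt.mp (abs_norm_sub_lt_of_mem_ball hζ hs.1.le (mem_ball_iff_norm.mpr hsw))
        have hs_mem : s ∈ ball ‖w‖ (1 - ‖w‖) := by
          rw [Real.ball_eq_Ioo]
          constructor <;> linarith
        rw [indicator_of_mem hs_mem]

/-- The sub-mean value property over discs of radius `(1 - s) / 2`, which stay in the approach
region, replaces an integral along a radius by an area integral. -/
theorem lintegral_radial_le_lintegral_stolzRegion {h : ℂ → ℂ} (hh : DifferentiableOn ℂ h 𝔻) {q : ℝ}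
    (hq : 1 ≤ q) (e : ℝ) (hR : R < 1) :
    ∫⁻ s in Ioo 0 R, ENNReal.ofReal ((1 - s) ^ e * ‖h (s * ζ)‖ ^ q) ≤
      ENNReal.ofReal (8 * 2 ^ |e - 2|) * ∫⁻ w in 𝔻 ∩ stolzRegion (R * ζ),
        ENNReal.ofReal ((1 - ‖w‖) ^ (e - 1) * ‖h w‖ ^ q) ∂dA := by
  have hF : AEMeasurable (fun w => ENNReal.ofReal ((1 - ‖w‖) ^ (e - 2) * ‖h w‖ ^ q))
      (dA.restrict 𝔻) :=
    ((by fun_prop : AEMeasurable (fun w : ℂ => (1 - ‖w‖) ^ (e - 2)) (dA.restrict 𝔻)).mul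
      ((hh.continuousOn.aemeasurable measurableSet_ball).norm.pow_const q)).ennreal_ofReal
  calc _ ≤ ∫⁻ s in Ioo 0 R, ENNReal.ofReal (4 * 2 ^ |e - 2|) *
          ∫⁻ w in ball (s * ζ) ((1 - s) / 2),
            ENNReal.ofReal ((1 - ‖w‖) ^ (e - 2) * ‖h w‖ ^ q) ∂dA :=
        setLIntegral_mono' measurableSet_Ioo fun s hs =>
          rpow_mul_norm_rpow_le_lintegral_ball hζ hh hq e hs.1.le (hs.2.trans hR)
    _ ≤ ENNReal.ofReal (4 * 2 ^ |e - 2|) * ∫⁻ w in 𝔻 ∩ stolzRegion (R * ζ),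
          ENNReal.ofReal ((1 - ‖w‖) ^ (e - 2) * ‖h w‖ ^ q) *
            ENNReal.ofReal (2 * (1 - ‖w‖)) ∂dA := by
        rw [lintegral_const_mul' _ _ ENNReal.ofReal_ne_top]
        exact mul_le_mul_right (lintegral_lintegral_ball_le_lintegral_stolzRegion hζ hR hF) _
    _ = _ := by
        rw [← lintegral_const_mul' _ _ ENNReal.ofReal_ne_top,
          ← lintegral_const_mul' _ _ ENNReal.ofReal_ne_top]
        refine setLIntegral_congr_fun
          (measurableSet_ball.inter (measurableSet_stolzRegion _)) fun w hw => ?_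
        have hw' := one_sub_norm_pos hw.1
        rw [← ENNReal.ofReal_mul (by positivity), ← ENNReal.ofReal_mul (by positivity),
          ← ENNReal.ofReal_mul (by positivity), show e - 1 = e - 2 + 1 by ring,
          Real.rpow_add_one hw'.ne']
        ring_nf

end Radial

/-! ### Growth of Besov functions -/

section PowerIntegral

variable {R : ℝ} (h0 : 0 ≤ R) (h1 : R < 1)

include h0 h1

theorem lintegral_one_sub_rpow (k : ℝ) :
    ∫⁻ s in Ioo 0 R, ENNReal.ofReal ((1 - s) ^ k) = ENNReal.ofReal (∫ x in (1 - R)..1, x ^ k) := by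
  have hpos : ∀ s ∈ Icc 0 R, 0 < 1 - s := fun s hs => by linarith [hs.2]
  have hint : IntegrableOn (fun s : ℝ => (1 - s) ^ k) (Icc 0 R) :=
    ContinuousOn.integrableOn_Icc fun s hs =>
      (ContinuousAt.rpow_const (by fun_prop) (Or.inl (hpos s hs).ne')).continuousWithinAt
  rw [← ofReal_integral_eq_lintegral_ofReal (hint.mono_set Ioo_subset_Icc_self)
      (ae_restrict_of_forall_mem measurableSet_Ioo fun s hs =>
        (Real.rpow_pos_of_pos (hpos s (Ioo_subset_Icc_self hs)) k).le),
    ← integral_Ioc_eq_integral_Ioo, ← intervalIntegral.integral_of_le h0,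
    intervalIntegral.integral_comp_sub_left (fun x => x ^ k), sub_zero]

theorem lintegral_one_sub_rpow_neg_one :
    ∫⁻ s in Ioo 0 R, ENNReal.ofReal ((1 - s) ^ (-1 : ℝ)) =
      ENNReal.ofReal (Real.log (1 / (1 - R))) := by
  rw [lintegral_one_sub_rpow h0 h1]
  simp only [Real.rpow_neg_one]
  rw [integral_inv_of_pos (by linarith) one_pos]

theorem lintegral_one_sub_rpow_neg_le {θ : ℝ} (hθ : θ < 1) :
    ∫⁻ s in Ioo 0 R, ENNReal.ofReal ((1 - s) ^ (-θ)) ≤ ENNReal.ofReal (1 / (1 - θ)) := by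
  have hθ' : 0 < -θ + 1 := by linarith
  have hR : 0 ≤ (1 - R) ^ (-θ + 1) := Real.rpow_nonneg (by linarith) _
  rw [lintegral_one_sub_rpow h0 h1, integral_rpow (Or.inl (by linarith)), Real.one_rpow,
    show 1 - θ = -θ + 1 by ring]
  gcongr
  linarith

end PowerIntegral

theorem lintegral_ofReal_le_rpow_mul_rpow {α : Type*} [MeasurableSpace α] {μ : Measure α}
    {p p' : ℝ} (hpp : p.HolderConjugate p') {u v : α → ℝ} (hu : AEMeasurable u μ)
    (hv : AEMeasurable v μ) (hu0 : 0 ≤ u) (hv0 : ∀ᵐ x ∂μ, 0 < v x) (e : ℝ) :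
    ∫⁻ x, ENNReal.ofReal (u x) ∂μ ≤ (∫⁻ x, ENNReal.ofReal (v x ^ e * u x ^ p) ∂μ) ^ (1 / p) *
      (∫⁻ x, ENNReal.ofReal (v x ^ (-(e / (p - 1)))) ∂μ) ^ (1 / p') := by
  calc ∫⁻ x, ENNReal.ofReal (u x) ∂μ
      = ∫⁻ x, ENNReal.ofReal (v x ^ (e / p) * u x) * ENNReal.ofReal (v x ^ (-(e / p))) ∂μ := by
        refine lintegral_congr_ae (hv0.mono fun x hx => ?_)
        dsimp only
        rw [← ENNReal.ofReal_mul (mul_nonneg (by positivity) (hu0 x)), Real.rpow_neg hx.le]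
        congr 1
        field_simp
    _ ≤ (∫⁻ x, ENNReal.ofReal (v x ^ (e / p) * u x) ^ p ∂μ) ^ (1 / p) *
        (∫⁻ x, ENNReal.ofReal (v x ^ (-(e / p))) ^ p' ∂μ) ^ (1 / p') :=
        ENNReal.lintegral_mul_le_Lp_mul_Lq μ hpp ((hv.pow_const _).mul hu).ennreal_ofReal
          (hv.pow_const _).ennreal_ofReal
    _ = _ := by
        congr 2
        · refine lintegral_congr_ae (hv0.mono fun x hx => ?_)
          dsimp only
          rw [ENNReal.ofReal_rpow_of_nonneg (mul_nonneg (by positivity) (hu0 x)) hpp.nonneg,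
            Real.mul_rpow (by positivity) (hu0 x), ← Real.rpow_mul hx.le,
            div_mul_cancel₀ _ hpp.ne_zero]
        · refine lintegral_congr_ae (hv0.mono fun x hx => ?_)
          have := hpp.sub_one_ne_zero
          have := hpp.ne_zero
          dsimp only
          rw [ENNReal.ofReal_rpow_of_nonneg (by positivity) hpp.symm.nonneg,
            ← Real.rpow_mul hx.le, hpp.conjugate_eq]
          congr 2
          field_simp

theorem exists_norm_eq_one_norm_mul_eq (z : ℂ) : ∃ ζ : ℂ, ‖ζ‖ = 1 ∧ (‖z‖ : ℂ) * ζ = z :=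
  ⟨exp (z.arg * I), norm_exp_ofReal_mul_I _, norm_mul_exp_arg_mul_I z⟩

section Growth

variable {f : ℂ → ℂ} (hf : HolOn f)

include hf

theorem enorm_sub_le_lintegral_radial {ζ : ℂ} (hζ : ‖ζ‖ = 1) {R : ℝ} (h0 : 0 ≤ R) (h1 : R < 1) :
    ‖f (R * ζ) - f 0‖ₑ ≤ ∫⁻ s in Ioo 0 R, ENNReal.ofReal ‖deriv f (s * ζ)‖ := by
  have hmem : ∀ s ∈ Icc 0 R, (s : ℂ) * ζ ∈ 𝔻 := fun s hs => by
    rw [mem_ball_zero_iff, norm_mul, hζ, mul_one, Complex.norm_of_nonneg hs.1]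
    exact hs.2.trans_lt h1
  have hcont : ContinuousOn (fun s : ℝ => deriv f (s * ζ) * ζ) (Icc 0 R) :=
    ((hf.deriv isOpen_ball).continuousOn.comp (by fun_prop) hmem).mul continuousOn_const
  have hFTC : ∫ s in (0 : ℝ)..R, deriv f (s * ζ) * ζ = f (R * ζ) - f 0 := by
    have h := intervalIntegral.integral_eq_sub_of_hasDerivAt (f := fun s : ℝ => f (s * ζ))
      (fun s hs => ((hf.differentiableAt (isOpen_ball.mem_nhds
        (hmem s (uIcc_of_le h0 ▸ hs)))).hasDerivAt.comp (s : ℂ)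
          ((hasDerivAt_id (s : ℂ)).mul_const ζ)).comp_ofReal)
      (by simpa only [one_mul] using
        (hcont.mono (uIcc_of_le h0).subset).intervalIntegrable)
    simpa only [one_mul, ofReal_zero, zero_mul] using h
  calc ‖f (R * ζ) - f 0‖ₑ ≤ ∫⁻ s in Ioo 0 R, ‖deriv f (s * ζ) * ζ‖ₑ := by
        rw [← hFTC, intervalIntegral.integral_of_le h0, integral_Ioc_eq_integral_Ioo]
        exact enorm_integral_le_lintegral_enorm _
    _ = _ := by simp only [← ofReal_norm, norm_mul, hζ, mul_one]

theorem enorm_sub_le_lintegral_stolzRegion {p p' : ℝ} (hpp : p.HolderConjugate p') (e : ℝ) {z : ℂ}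
    (hz : z ∈ 𝔻) :
    ‖f z - f 0‖ₑ ≤ (ENNReal.ofReal (8 * 2 ^ |e - 2|) * ∫⁻ w in 𝔻 ∩ stolzRegion z,
        ENNReal.ofReal ((1 - ‖w‖) ^ (e - 1) * ‖deriv f w‖ ^ p) ∂dA) ^ (1 / p) *
      (∫⁻ s in Ioo 0 ‖z‖, ENNReal.ofReal ((1 - s) ^ (-(e / (p - 1))))) ^ (1 / p') := by
  obtain ⟨ζ, hζ, hzζ⟩ := exists_norm_eq_one_norm_mul_eq z
  have hz1 : ‖z‖ < 1 := mem_ball_zero_iff.mp hz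
  calc ‖f z - f 0‖ₑ ≤ ∫⁻ s in Ioo 0 ‖z‖, ENNReal.ofReal ‖deriv f (s * ζ)‖ := by
        simpa only [hzζ] using enorm_sub_le_lintegral_radial hf hζ (norm_nonneg z) hz1
    _ ≤ (∫⁻ s in Ioo 0 ‖z‖, ENNReal.ofReal ((1 - s) ^ e * ‖deriv f (s * ζ)‖ ^ p)) ^ (1 / p) *
        (∫⁻ s in Ioo 0 ‖z‖, ENNReal.ofReal ((1 - s) ^ (-(e / (p - 1))))) ^ (1 / p') :=
        lintegral_ofReal_le_rpow_mul_rpow hpp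
          ((measurable_deriv f).comp (by fun_prop)).norm.aemeasurable (by fun_prop)
          (fun _ => norm_nonneg _)
          (ae_restrict_of_forall_mem measurableSet_Ioo fun s hs => by linarith [hs.2]) e
    _ ≤ _ := by
        have hradial := lintegral_radial_le_lintegral_stolzRegion hζ (hf.deriv isOpen_ball)
          hpp.lt.le e hz1
        rw [hzζ] at hradial
        have := hpp.nonneg
        gcongr

theorem enorm_sub_rpow_le_lintegral_stolzRegion {q s : ℝ} (hq : 1 < q) (hs : 0 < s) {z : ℂ}
    (hz : z ∈ 𝔻) :
    ‖f z - f 0‖ₑ ^ q ≤ ENNReal.ofReal (8 * 2 ^ |q - 3 - s| * ((q - 1) / s) ^ (q - 1)) *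
      ∫⁻ w in 𝔻 ∩ stolzRegion z,
        ENNReal.ofReal ((1 - ‖w‖) ^ (q - 2 - s) * ‖deriv f w‖ ^ q) ∂dA := by
  have hpp := Real.HolderConjugate.conjExponent hq
  have hq0 : 0 ≤ q := hpp.nonneg
  have hq1 : 0 < q - 1 := by linarith
  have hgrowth := enorm_sub_le_lintegral_stolzRegion hf hpp (q - 1 - s) hz
  rw [show q - 1 - s - 2 = q - 3 - s by ring, show q - 1 - s - 1 = q - 2 - s by ring] at hgrowth
  have hweight : ∫⁻ t in Ioo 0 ‖z‖, ENNReal.ofReal ((1 - t) ^ (-((q - 1 - s) / (q - 1)))) ≤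
      ENNReal.ofReal ((q - 1) / s) := by
    convert lintegral_one_sub_rpow_neg_le (norm_nonneg z) (mem_ball_zero_iff.mp hz)
      ((div_lt_one hq1).mpr (by linarith : q - 1 - s < q - 1)) using 2
    rw [one_sub_div hq1.ne', sub_sub_cancel, one_div_div]
  calc ‖f z - f 0‖ₑ ^ q ≤ _ := ENNReal.rpow_le_rpow hgrowth hq0
    _ ≤ _ := by
        rw [ENNReal.mul_rpow_of_nonneg _ _ hq0, ← ENNReal.rpow_mul, ← ENNReal.rpow_mul,
          one_div_mul_cancel hpp.ne_zero, ENNReal.rpow_one, one_div_mul_eq_div,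
          hpp.div_conj_eq_sub_one, mul_right_comm,
          ENNReal.ofReal_mul (p := 8 * 2 ^ |q - 3 - s|) (by positivity),
          ← ENNReal.ofReal_rpow_of_nonneg (by positivity) hq1.le]
        gcongr

end Growth

/-- The weight `log (2 / (1 - |a|))` of the spaces `QsLog`; it is comparable to the square of the
norm of the point evaluation at `a` on the Dirichlet space `B²`. -/
noncomputable def logWeight (a : ℂ) : ℝ := Real.log (2 / (1 - ‖a‖))

theorem half_le_logWeight {a : ℂ} (ha : a ∈ 𝔻) : 1 / 2 ≤ logWeight a := by
  have ha' := one_sub_norm_pos ha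
  calc (1 : ℝ) / 2 ≤ Real.log 2 := by linarith [Real.log_two_gt_d9]
    _ ≤ logWeight a := Real.log_le_log two_pos <| by
        rw [le_div_iff₀ ha']
        linarith [norm_nonneg a]

theorem logWeight_pos {a : ℂ} (ha : a ∈ 𝔻) : 0 < logWeight a :=
  one_half_pos.trans_le (half_le_logWeight ha)

theorem one_le_two_mul_logWeight_rpow {a : ℂ} (ha : a ∈ 𝔻) {θ : ℝ} (h0 : 0 ≤ θ) (h1 : θ ≤ 1) :
    1 ≤ 2 * logWeight a ^ θ := by
  have hL := half_le_logWeight ha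
  calc 1 ≤ (2 * logWeight a) ^ θ := Real.one_le_rpow (by linarith) h0
    _ = 2 ^ θ * logWeight a ^ θ := Real.mul_rpow zero_le_two (logWeight_pos ha).le
    _ ≤ 2 * logWeight a ^ θ := by
        have := (logWeight_pos ha).le
        gcongr
        exact Real.rpow_le_self_of_one_le one_le_two h1

/-- The energy `∫ (1 - |z|)^(p-2) |f'(z)|^p dA(z)` whose finiteness defines the space `Besov p`. -/
noncomputable def besovEnergy (p : ℝ) (f : ℂ → ℂ) : ℝ≥0∞ :=
  ∫⁻ z in 𝔻, ENNReal.ofReal ((1 - ‖z‖) ^ (p - 2) * ‖deriv f z‖ ^ p) ∂dA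

theorem exists_enorm_le_mul_logWeight_rpow {p p' : ℝ} (hpp : p.HolderConjugate p') {f : ℂ → ℂ}
    (hf : f ∈ Besov p) :
    ∃ C : ℝ≥0, ∀ a ∈ 𝔻, ‖f a‖ₑ ≤ C * ENNReal.ofReal (logWeight a ^ (1 / p')) := by
  obtain ⟨hhol, hfin⟩ := hf
  set B := (ENNReal.ofReal (8 * 2 ^ |p - 1 - 2|) * besovEnergy p f) ^ (1 / p)
  have hB : B ≠ ⊤ := ENNReal.rpow_ne_top_of_nonneg (one_div_nonneg.mpr hpp.nonneg)
    (ENNReal.mul_ne_top ENNReal.ofReal_ne_top hfin.ne)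
  have hp' : 0 ≤ 1 / p' := one_div_nonneg.mpr hpp.symm.nonneg
  refine ⟨(B + ‖f 0‖ₑ * 2).toNNReal, fun a ha => ?_⟩
  rw [ENNReal.coe_toNNReal (by finiteness)]
  have hL := logWeight_pos ha
  have ha' := one_sub_norm_pos ha
  have hgrowth := enorm_sub_le_lintegral_stolzRegion hhol hpp (p - 1) ha
  rw [div_self hpp.sub_one_ne_zero,
    lintegral_one_sub_rpow_neg_one (norm_nonneg a) (mem_ball_zero_iff.mp ha),
    show p - 1 - 1 = p - 2 by ring] at hgrowth
  have hone : 1 ≤ 2 * ENNReal.ofReal (logWeight a ^ (1 / p')) := by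
    rw [← ENNReal.ofReal_ofNat 2, ← ENNReal.ofReal_mul zero_le_two, ENNReal.one_le_ofReal]
    exact one_le_two_mul_logWeight_rpow ha hp'
      (by rw [one_div]; exact inv_le_one_of_one_le₀ hpp.symm.lt.le)
  calc ‖f a‖ₑ = ‖(f a - f 0) + f 0‖ₑ := by rw [sub_add_cancel]
    _ ≤ ‖f a - f 0‖ₑ + ‖f 0‖ₑ * 1 := (enorm_add_le _ _).trans_eq (by rw [mul_one])
    _ ≤ B * ENNReal.ofReal (logWeight a ^ (1 / p')) +
        ‖f 0‖ₑ * (2 * ENNReal.ofReal (logWeight a ^ (1 / p'))) := by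
        refine add_le_add (hgrowth.trans ?_) (mul_le_mul_right hone _)
        rw [← ENNReal.ofReal_rpow_of_nonneg hL.le hp']
        have := hpp.nonneg
        refine mul_le_mul' (ENNReal.rpow_le_rpow ?_ (by positivity)) (ENNReal.rpow_le_rpow ?_ hp')
        · exact mul_le_mul_right (lintegral_mono_set inter_subset_left) _
        · unfold logWeight
          gcongr
          exact one_le_two
    _ = _ := by ring

/-! ### The Carleson embedding -/

/-- The measure `|g'(z)|² (1 - |φ_a(z)|²)^s dA(z)` on the unit disc. Its total mass is the quantity
whose supremum over `a` defines the space `Qs s`. -/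
noncomputable def qsMeasure (s : ℝ) (g : ℂ → ℂ) (a : ℂ) : Measure ℂ :=
  (dA.restrict 𝔻).withDensity fun z =>
    ENNReal.ofReal (‖deriv g z‖ ^ 2 * (1 - ‖phi a z‖ ^ 2) ^ s)

/-- The energy `∫ (1 - |w|²)^(q-2) |f'(w)|^q dA(w)` of the Besov space `B^q`, with the hyperbolic
weight `1 - |w|²` in place of `1 - |w|`, which makes it invariant under Möbius transformations. -/
noncomputable def moebiusEnergy (q : ℝ) (f : ℂ → ℂ) : ℝ≥0∞ :=
  ∫⁻ w in 𝔻, ENNReal.ofReal ((1 - ‖w‖ ^ 2) ^ (q - 2) * ‖deriv f w‖ ^ q) ∂dA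

theorem measurable_qsMeasure_density (s : ℝ) (g : ℂ → ℂ) (a : ℂ) :
    Measurable fun z => ENNReal.ofReal (‖deriv g z‖ ^ 2 * (1 - ‖phi a z‖ ^ 2) ^ s) := by
  have hphi : Measurable (phi a) := by unfold phi; fun_prop
  have : Measurable (deriv g) := measurable_deriv g
  fun_prop

theorem lintegral_qsMeasure (s : ℝ) (g : ℂ → ℂ) (a : ℂ) (h : ℂ → ℝ≥0∞) :
    ∫⁻ z, h z ∂qsMeasure s g a =
      ∫⁻ z in 𝔻, ENNReal.ofReal (‖deriv g z‖ ^ 2 * (1 - ‖phi a z‖ ^ 2) ^ s) * h z ∂dA :=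
  lintegral_withDensity_eq_lintegral_mul_non_measurable _ (measurable_qsMeasure_density s g a)
    (Eventually.of_forall fun _ => ENNReal.ofReal_lt_top) h

theorem qsMeasure_univ (s : ℝ) (g : ℂ → ℂ) (a : ℂ) : qsMeasure s g a univ =
    ∫⁻ z in 𝔻, ENNReal.ofReal (‖deriv g z‖ ^ 2 * (1 - ‖phi a z‖ ^ 2) ^ s) ∂dA := by
  rw [← lintegral_one, lintegral_qsMeasure]
  simp only [mul_one]

theorem qsMeasure_absolutelyContinuous (s : ℝ) (g : ℂ → ℂ) (a : ℂ) :
    qsMeasure s g a ≪ dA.restrict 𝔻 :=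
  withDensity_absolutelyContinuous _ _

instance (s : ℝ) (g : ℂ → ℂ) (a : ℂ) : SFinite (qsMeasure s g a) := by
  unfold qsMeasure; infer_instance

section MoebiusInvariance

variable {a : ℂ} (ha : a ∈ 𝔻)

include ha

theorem holOn_comp_phi {h : ℂ → ℂ} (hh : HolOn h) : HolOn (h ∘ phi a) :=
  DifferentiableOn.comp hh (differentiableOn_phi ha) fun _ => phi_mem_ball ha

theorem norm_deriv_comp_phi {h : ℂ → ℂ} (hh : HolOn h) {z : ℂ} (hz : z ∈ 𝔻) :
    ‖deriv (h ∘ phi a) z‖ = ‖deriv h (phi a z)‖ * ‖deriv (phi a) z‖ := by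
  rw [deriv_comp z (hh.differentiableAt (isOpen_ball.mem_nhds (phi_mem_ball ha hz)))
    (hasDerivAt_phi ha hz).differentiableAt, norm_mul]

theorem lintegral_comp_phi_qsMeasure (s : ℝ) {g : ℂ → ℂ} (hg : HolOn g) {b : ℂ} (hb : b ∈ 𝔻)
    (h : ℂ → ℝ≥0∞) :
    ∫⁻ z, h (phi a z) ∂qsMeasure s (g ∘ phi a) b = ∫⁻ z, h z ∂qsMeasure s g (phi a b) := by
  rw [lintegral_qsMeasure, lintegral_qsMeasure]
  refine .trans ?_ (lintegral_norm_deriv_phi_sq_mul_comp_phi ha _)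
  refine setLIntegral_congr_fun measurableSet_ball fun z hz => ?_
  rw [norm_deriv_comp_phi ha hg hz, one_sub_norm_phi_phi_sq ha hb hz, ← mul_assoc,
    ← ENNReal.ofReal_mul (by positivity)]
  ring_nf

theorem moebiusEnergy_comp_phi (q : ℝ) {f : ℂ → ℂ} (hf : HolOn f) :
    moebiusEnergy q (f ∘ phi a) = moebiusEnergy q f := by
  refine .trans ?_ (lintegral_norm_deriv_phi_sq_mul_comp_phi ha _)
  refine setLIntegral_congr_fun measurableSet_ball fun z hz => ?_
  have hz' := one_sub_norm_sq_pos hz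
  have hpos : 0 < ‖deriv (phi a) z‖ := pos_of_mul_pos_left
    (norm_deriv_phi_mul ha hz ▸ one_sub_norm_sq_pos (phi_mem_ball ha hz)) hz'.le
  have hsplit : ‖deriv (phi a) z‖ ^ q = ‖deriv (phi a) z‖ ^ (q - 2) * ‖deriv (phi a) z‖ ^ 2 := by
    rw [← Real.rpow_two, ← Real.rpow_add hpos, sub_add_cancel]
  rw [norm_deriv_comp_phi ha hf hz, ← norm_deriv_phi_mul ha hz,
    ← ENNReal.ofReal_mul (by positivity), Real.mul_rpow hpos.le hz'.le,
    Real.mul_rpow (norm_nonneg _) hpos.le, hsplit]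
  ring_nf

end MoebiusInvariance

theorem one_sub_norm_sq_le_of_mem_stolzRegion {w z : ℂ} (hw : w ∈ 𝔻) (hz : z ∈ 𝔻)
    (hwz : w ∈ stolzRegion z) :
    1 - ‖z‖ ^ 2 ≤ 25 * (1 - ‖w‖) * (1 - ‖phi w z‖ ^ 2) := by
  have hd := norm_one_sub_conj_mul_pos hw hz
  have hw0 := one_sub_norm_pos hw
  have hd2 : ‖1 - conj w * z‖ ^ 2 ≤ 25 * (1 - ‖w‖) * (1 - ‖w‖ ^ 2) :=
    calc ‖1 - conj w * z‖ ^ 2 ≤ (5 * (1 - ‖w‖)) ^ 2 := by gcongr; exact hwz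
      _ = 25 * (1 - ‖w‖) * (1 - ‖w‖) := by ring
      _ ≤ _ := mul_le_mul_of_nonneg_left (one_sub_norm_le_one_sub_norm_sq hw) (by positivity)
  rw [one_sub_norm_phi_sq hw hz, ← mul_div_assoc, le_div_iff₀ (by positivity)]
  nlinarith [one_sub_norm_sq_pos hz]

/-- For `‖w‖` close to `1` the set on the left is comparable to a Carleson box at `w`, so that a
uniform bound for `qsMeasure s g w univ` makes `qsMeasure s g 0` an `s`-Carleson measure. -/
theorem qsMeasure_zero_setOf_mem_stolzRegion_le {s : ℝ} (hs : 0 ≤ s) (g : ℂ → ℂ) {w : ℂ}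
    (hw : w ∈ 𝔻) :
    qsMeasure s g 0 {z | w ∈ stolzRegion z} ≤
      ENNReal.ofReal ((25 * (1 - ‖w‖)) ^ s) * qsMeasure s g w univ := by
  have hw0 := one_sub_norm_pos hw
  have hmeas : MeasurableSet {z | w ∈ stolzRegion z} :=
    (isClosed_setOf_mem_stolzRegion.preimage (Continuous.prodMk_left w)).measurableSet
  rw [← lintegral_indicator_one hmeas, lintegral_qsMeasure, qsMeasure_univ,
    ← lintegral_const_mul' _ _ ENNReal.ofReal_ne_top]
  refine setLIntegral_mono' measurableSet_ball fun z hz => ?_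
  by_cases hwz : w ∈ stolzRegion z
  · have hz' := one_sub_norm_sq_pos hz
    have hphi := one_sub_norm_sq_pos (phi_mem_ball hw hz)
    rw [indicator_of_mem (show z ∈ {z | w ∈ stolzRegion z} from hwz), Pi.one_apply, mul_one,
      norm_phi_zero_left, ← ENNReal.ofReal_mul (by positivity), mul_left_comm,
      ← Real.mul_rpow (by positivity) hphi.le]
    gcongr
    exact one_sub_norm_sq_le_of_mem_stolzRegion hw hz hwz
  · rw [indicator_of_notMem (show z ∉ {z | w ∈ stolzRegion z} from hwz), mul_zero]
    exact zero_le

/-- The constant in the embedding of `B^q` into `L^q` of the measures `qsMeasure s g a`. -/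
noncomputable def carlesonConst (q s : ℝ) : ℝ≥0∞ :=
  ENNReal.ofReal (8 * 2 ^ |q - 3 - s| * ((q - 1) / s) ^ (q - 1)) * ENNReal.ofReal (25 ^ s)

section CarlesonEmbedding

variable {q s : ℝ} (hq : 2 ≤ q) (hs : 0 < s) {g f : ℂ → ℂ} {M : ℝ≥0∞}
  (hM : ∀ b ∈ 𝔻, qsMeasure s g b univ ≤ M)

include hq hs hM

theorem mul_qsMeasure_zero_setOf_mem_stolzRegion_le {w : ℂ} (hw : w ∈ 𝔻) {x : ℝ} (hx : 0 ≤ x) :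
    ENNReal.ofReal ((1 - ‖w‖) ^ (q - 2 - s) * x) * qsMeasure s g 0 {z | w ∈ stolzRegion z} ≤
      ENNReal.ofReal (25 ^ s) * M * ENNReal.ofReal ((1 - ‖w‖ ^ 2) ^ (q - 2) * x) := by
  have hw0 := one_sub_norm_pos hw
  calc _ ≤ ENNReal.ofReal ((1 - ‖w‖) ^ (q - 2 - s) * x) *
          (ENNReal.ofReal ((25 * (1 - ‖w‖)) ^ s) * M) := by
        gcongr
        refine (qsMeasure_zero_setOf_mem_stolzRegion_le hs.le g hw).trans ?_
        gcongr
        exact hM w hw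
    _ = ENNReal.ofReal (25 ^ s) * M * ENNReal.ofReal ((1 - ‖w‖) ^ (q - 2) * x) := by
        have hsplit : (1 - ‖w‖) ^ (q - 2) * x = (1 - ‖w‖) ^ (q - 2 - s) * x * (1 - ‖w‖) ^ s := by
          rw [mul_right_comm, ← Real.rpow_add hw0, sub_add_cancel]
        rw [hsplit, ENNReal.ofReal_mul (p := _ * x) (by positivity),
          Real.mul_rpow (by norm_num) hw0.le, ENNReal.ofReal_mul (p := 25 ^ s) (by positivity)]
        ring
    _ ≤ _ := by
        gcongr _ * ENNReal.ofReal (?_ * _)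
        exact Real.rpow_le_rpow hw0.le (one_sub_norm_le_one_sub_norm_sq hw) (by linarith)

theorem lintegral_enorm_sub_rpow_qsMeasure_zero_le (hf : HolOn f) :
    ∫⁻ z, ‖f z - f 0‖ₑ ^ q ∂qsMeasure s g 0 ≤ carlesonConst q s * M * moebiusEnergy q f := by
  set K := ENNReal.ofReal (8 * 2 ^ |q - 3 - s| * ((q - 1) / s) ^ (q - 1))
  set Φ : ℂ → ℝ≥0∞ := fun w => ENNReal.ofReal ((1 - ‖w‖) ^ (q - 2 - s) * ‖deriv f w‖ ^ q)
  set S : Set (ℂ × ℂ) := {x | x.2 ∈ stolzRegion x.1}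
  have hS : MeasurableSet S := isClosed_setOf_mem_stolzRegion.measurableSet
  have hΦ : Measurable Φ := by
    have := measurable_deriv f
    fun_prop
  calc ∫⁻ z, ‖f z - f 0‖ₑ ^ q ∂qsMeasure s g 0
      ≤ ∫⁻ z, K * ∫⁻ w in 𝔻, S.indicator (fun x => Φ x.2) (z, w) ∂dA ∂qsMeasure s g 0 := by
        refine lintegral_mono_ae ((qsMeasure_absolutelyContinuous s g 0).ae_le
          (ae_restrict_of_forall_mem measurableSet_ball fun z hz => ?_))
        refine (enorm_sub_rpow_le_lintegral_stolzRegion hf (by linarith) hs hz).trans_eq ?_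
        rw [inter_comm, ← setLIntegral_indicator (measurableSet_stolzRegion z)]
        rfl
    _ = K * ∫⁻ w in 𝔻, ∫⁻ z, S.indicator (fun x => Φ x.2) (z, w) ∂qsMeasure s g 0 ∂dA := by
        rw [lintegral_const_mul' _ _ ENNReal.ofReal_ne_top]
        exact congrArg (K * ·) (lintegral_lintegral_swap
          ((hΦ.comp measurable_snd).indicator hS).aemeasurable)
    _ ≤ K * ∫⁻ w in 𝔻, ENNReal.ofReal (25 ^ s) * M *
          ENNReal.ofReal ((1 - ‖w‖ ^ 2) ^ (q - 2) * ‖deriv f w‖ ^ q) ∂dA := by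
        gcongr K * ?_
        refine setLIntegral_mono' measurableSet_ball fun w hw => ?_
        calc ∫⁻ z, S.indicator (fun x => Φ x.2) (z, w) ∂qsMeasure s g 0
            = Φ w * qsMeasure s g 0 {z | w ∈ stolzRegion z} :=
              lintegral_indicator_const (hS.preimage (measurable_prodMk_right (y := w))) (Φ w)
          _ ≤ _ := mul_qsMeasure_zero_setOf_mem_stolzRegion_le hq hs hM hw (by positivity)
    _ = carlesonConst q s * M * moebiusEnergy q f := by
        rw [lintegral_const_mul _ (by have := measurable_deriv f; fun_prop), carlesonConst,
          moebiusEnergy]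
        ring

theorem lintegral_enorm_sub_rpow_qsMeasure_le (hg : HolOn g) (hf : HolOn f) {a : ℂ} (ha : a ∈ 𝔻) :
    ∫⁻ z, ‖f z - f a‖ₑ ^ q ∂qsMeasure s g a ≤ carlesonConst q s * M * moebiusEnergy q f := by
  have hbound : ∀ b ∈ 𝔻, qsMeasure s (g ∘ phi a) b univ ≤ M := fun b hb => by
    rw [← lintegral_one, lintegral_comp_phi_qsMeasure ha s hg hb fun _ => 1, lintegral_one]
    exact hM _ (phi_mem_ball ha hb)
  have hzero := lintegral_enorm_sub_rpow_qsMeasure_zero_le hq hs hbound (holOn_comp_phi ha hf)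
  rw [moebiusEnergy_comp_phi ha q hf] at hzero
  simpa only [Function.comp_apply, phi_zero_right,
    lintegral_comp_phi_qsMeasure ha s hg (mem_ball_self one_pos) fun z => ‖f z - f a‖ₑ ^ q,
    phi_zero_right] using hzero

theorem lintegral_enorm_sub_sq_qsMeasure_le (hg : HolOn g) (hf : HolOn f) {a : ℂ} (ha : a ∈ 𝔻) :
    ∫⁻ z, ‖f z - f a‖ₑ ^ 2 ∂qsMeasure s g a ≤ M + carlesonConst q s * M * moebiusEnergy q f := by
  have hsq : ∀ x : ℝ≥0∞, x ^ 2 ≤ 1 + x ^ q := fun x => by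
    rcases le_total x 1 with h | h
    · exact (pow_le_one₀ zero_le h).trans le_self_add
    · rw [← ENNReal.rpow_two]
      exact (ENNReal.rpow_le_rpow_of_exponent_le h hq).trans le_add_self
  calc ∫⁻ z, ‖f z - f a‖ₑ ^ 2 ∂qsMeasure s g a
      ≤ ∫⁻ z, 1 + ‖f z - f a‖ₑ ^ q ∂qsMeasure s g a := lintegral_mono fun _ => hsq _
    _ = qsMeasure s g a univ + ∫⁻ z, ‖f z - f a‖ₑ ^ q ∂qsMeasure s g a := by
        rw [lintegral_add_left measurable_const, lintegral_one]
    _ ≤ _ := add_le_add (hM a ha) (lintegral_enorm_sub_rpow_qsMeasure_le hq hs hM hg hf ha)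

end CarlesonEmbedding

theorem exists_one_sub_norm_mul_norm_deriv_le {p : ℝ} (hp : 1 ≤ p) {f : ℂ → ℂ} (hf : f ∈ Besov p) :
    ∃ B : ℝ, 0 ≤ B ∧ ∀ w ∈ 𝔻, (1 - ‖w‖) * ‖deriv f w‖ ≤ B := by
  obtain ⟨hhol, hfin⟩ := hf
  have hp0 : 0 < p := one_pos.trans_le hp
  set N := ENNReal.ofReal (4 * 2 ^ |p - 2|) * besovEnergy p f
  have hN : N ≠ ⊤ := ENNReal.mul_ne_top ENNReal.ofReal_ne_top hfin.ne
  refine ⟨N.toReal ^ p⁻¹, by positivity, fun w hw => ?_⟩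
  obtain ⟨ζ, hζ, hwζ⟩ := exists_norm_eq_one_norm_mul_eq w
  have hw0 := one_sub_norm_pos hw
  have hmean : ENNReal.ofReal (((1 - ‖w‖) * ‖deriv f w‖) ^ p) ≤ N := by
    have hball := rpow_mul_norm_rpow_le_lintegral_ball hζ (hhol.deriv isOpen_ball) hp p
      (norm_nonneg w) (mem_ball_zero_iff.mp hw)
    rw [hwζ] at hball
    rw [Real.mul_rpow hw0.le (norm_nonneg _)]
    refine hball.trans (mul_le_mul_right (lintegral_mono_set ?_) _)
    rw [← hwζ, norm_mul, hζ, mul_one, norm_real, norm_norm]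
    exact ball_subset_unitBall hζ (norm_nonneg w) (mem_ball_zero_iff.mp hw)
  rw [Real.le_rpow_inv_iff_of_pos (by positivity) (by positivity) hp0]
  exact (ENNReal.ofReal_le_iff_le_toReal hN).mp hmean

theorem moebiusEnergy_lt_top {p q : ℝ} (hp : 1 ≤ p) (hpq : p ≤ q) (hq : 2 ≤ q) {f : ℂ → ℂ}
    (hf : f ∈ Besov p) : moebiusEnergy q f < ⊤ := by
  obtain ⟨B, hB, hBloch⟩ := exists_one_sub_norm_mul_norm_deriv_le hp hf
  calc moebiusEnergy q f
      ≤ ∫⁻ w in 𝔻, ENNReal.ofReal (2 ^ (q - 2) * B ^ (q - p)) *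
        ENNReal.ofReal ((1 - ‖w‖) ^ (p - 2) * ‖deriv f w‖ ^ p) ∂dA := by
        refine setLIntegral_mono' measurableSet_ball fun w hw => ?_
        have hw0 := one_sub_norm_pos hw
        rw [← ENNReal.ofReal_mul (by positivity)]
        refine ENNReal.ofReal_le_ofReal ?_
        calc (1 - ‖w‖ ^ 2) ^ (q - 2) * ‖deriv f w‖ ^ q
            ≤ (2 * (1 - ‖w‖)) ^ (q - 2) * ‖deriv f w‖ ^ q := by
              gcongr ?_ * _
              exact Real.rpow_le_rpow (one_sub_norm_sq_pos hw).le (one_sub_norm_sq_le_two_mul hw)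
                (by linarith)
          _ = 2 ^ (q - 2) * ((1 - ‖w‖) * ‖deriv f w‖) ^ (q - p) *
                ((1 - ‖w‖) ^ (p - 2) * ‖deriv f w‖ ^ p) := by
              have hweight : (1 - ‖w‖) ^ (q - 2) = (1 - ‖w‖) ^ (q - p) * (1 - ‖w‖) ^ (p - 2) := by
                rw [← Real.rpow_add hw0, sub_add_sub_cancel]
              have hderiv : ‖deriv f w‖ ^ q = ‖deriv f w‖ ^ (q - p) * ‖deriv f w‖ ^ p := by
                rw [← Real.rpow_add_of_nonneg (norm_nonneg _) (by linarith) (by linarith),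
                  sub_add_cancel]
              rw [Real.mul_rpow zero_le_two hw0.le, Real.mul_rpow hw0.le (norm_nonneg _), hweight,
                hderiv]
              ring
          _ ≤ _ := by
              gcongr 2 ^ (q - 2) * ?_ * _
              exact Real.rpow_le_rpow (by positivity) (hBloch w hw) (by linarith)
    _ < ⊤ := by
        rw [lintegral_const_mul' _ _ ENNReal.ofReal_ne_top]
        exact ENNReal.mul_lt_top ENNReal.ofReal_lt_top hf.2

/-! ### Sufficiency -/

theorem hasDerivAt_Tg {g f : ℂ → ℂ} (hg : HolOn g) (hf : HolOn f) {z : ℂ} (hz : z ∈ 𝔻) :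
    HasDerivAt (Tg g f) (deriv g z * f z) z := by
  have hgf : DifferentiableOn ℂ (fun z => deriv g z * f z) 𝔻 := (hg.deriv isOpen_ball).mul hf
  obtain ⟨H, hH0, hH⟩ := hgf.isExactOn_ball.with_val_at 0 0
  have hTg : ∀ w ∈ 𝔻, Tg g f w = H w := fun w hw => by
    have hmem : ∀ t ∈ uIcc (0 : ℝ) 1, (t : ℂ) * w ∈ 𝔻 := fun t ht => by
      rw [uIcc_of_le zero_le_one] at ht
      rw [mem_ball_zero_iff, norm_mul, Complex.norm_real, Real.norm_of_nonneg ht.1]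
      exact (mul_le_of_le_one_left (norm_nonneg w) ht.2).trans_lt (mem_ball_zero_iff.mp hw)
    have hray (t : ℝ) : HasDerivAt (fun t : ℝ => (t : ℂ) * w) w t := by
      simpa only [id, ofReal_one, one_mul] using (hasDerivAt_id t).ofReal_comp.mul_const w
    have hcont : ContinuousOn (fun t : ℝ => deriv g (t * w) * f (t * w)) (uIcc 0 1) :=
      hgf.continuousOn.comp (f := fun t : ℝ => (t : ℂ) * w) (by fun_prop) hmem
    have hFTC := intervalIntegral.integral_eq_sub_of_hasDerivAt
      (fun t ht => (hH _ (hmem t ht)).comp t (hray t))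
      (hcont.mul continuousOn_const).intervalIntegrable
    rw [intervalIntegral.integral_mul_const] at hFTC
    simpa only [Tg, Function.comp_apply, ofReal_one, one_mul, ofReal_zero, zero_mul, hH0, sub_zero,
      mul_comm w] using hFTC
  exact (hH z hz).congr_of_eventuallyEq (eventually_of_mem (isOpen_ball.mem_nhds hz) hTg)

theorem holOn_Tg {g f : ℂ → ℂ} (hg : HolOn g) (hf : HolOn f) : HolOn (Tg g f) :=
  fun _ hz => (hasDerivAt_Tg hg hf hz).differentiableAt.differentiableWithinAt

theorem Tg_mem_Qs_iff {g f : ℂ → ℂ} (hg : HolOn g) (hf : HolOn f) {s : ℝ} :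
    Tg g f ∈ Qs s ↔ ⨆ a ∈ 𝔻, ∫⁻ z, ‖f z‖ₑ ^ 2 ∂qsMeasure s g a < ⊤ := by
  have henergy (a : ℂ) : ∫⁻ z, ‖f z‖ₑ ^ 2 ∂qsMeasure s g a =
      ∫⁻ z in 𝔻, ENNReal.ofReal (‖deriv (Tg g f) z‖ ^ 2 * (1 - ‖phi a z‖ ^ 2) ^ s) ∂dA := by
    rw [lintegral_qsMeasure]
    refine setLIntegral_congr_fun measurableSet_ball fun z hz => ?_
    rw [(hasDerivAt_Tg hg hf hz).deriv, norm_mul, ← ofReal_norm,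
      ← ENNReal.ofReal_pow (norm_nonneg _), ← ENNReal.ofReal_mul' (by positivity)]
    ring_nf
  simp only [henergy]
  exact and_iff_right (holOn_Tg hg hf)

theorem mem_QsLog_iff {g : ℂ → ℂ} {s α : ℝ} :
    g ∈ QsLog s α ↔ HolOn g ∧
      ⨆ a ∈ 𝔻, ENNReal.ofReal (logWeight a ^ α) ^ 2 * qsMeasure s g a univ < ⊤ := by
  have hweight {a : ℂ} (ha : a ∈ 𝔻) :
      ENNReal.ofReal (logWeight a ^ α) ^ 2 = ENNReal.ofReal (logWeight a ^ (2 * α)) := by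
    have hL := logWeight_pos ha
    rw [← ENNReal.ofReal_pow (by positivity), ← Real.rpow_two, ← Real.rpow_mul hL.le, mul_comm]
  refine and_congr_right fun _ => iff_of_eq (congrArg (· < ⊤) (biSup_congr fun a ha => ?_))
  rw [hweight ha, qsMeasure_univ]
  rfl

theorem enorm_sq_le_two_mul_add_two_mul (u v : ℂ) :
    ‖u‖ₑ ^ 2 ≤ 2 * ‖v‖ₑ ^ 2 + 2 * ‖u - v‖ₑ ^ 2 := by
  have h : ‖u‖₊ ≤ ‖v‖₊ + ‖u - v‖₊ := by simpa only [add_sub_cancel] using nnnorm_add_le v (u - v)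
  have hsq : ‖u‖₊ ^ 2 ≤ 2 * ‖v‖₊ ^ 2 + 2 * ‖u - v‖₊ ^ 2 := by
    rw [← mul_add]
    exact (pow_le_pow_left₀ zero_le h 2).trans add_sq_le
  simp only [enorm_eq_nnnorm]
  exact_mod_cast hsq

theorem qsMeasure_univ_le_four_mul_logWeight_rpow_sq (s : ℝ) (g : ℂ → ℂ) {a : ℂ} (ha : a ∈ 𝔻)
    {θ : ℝ} (h0 : 0 ≤ θ) (h1 : θ ≤ 1) :
    qsMeasure s g a univ ≤
      4 * (ENNReal.ofReal (logWeight a ^ θ) ^ 2 * qsMeasure s g a univ) := by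
  have hL : 1 ≤ 2 * ENNReal.ofReal (logWeight a ^ θ) := by
    rw [← ENNReal.ofReal_ofNat, ← ENNReal.ofReal_mul zero_le_two, ENNReal.one_le_ofReal]
    exact one_le_two_mul_logWeight_rpow ha h0 h1
  calc qsMeasure s g a univ
      ≤ (2 * ENNReal.ofReal (logWeight a ^ θ)) ^ 2 * qsMeasure s g a univ :=
        le_mul_of_one_le_left' (one_le_pow₀ hL)
    _ = _ := by ring

theorem mapsInto_Tg_of_mem_QsLog {p p' : ℝ} (hpp : p.HolderConjugate p') {s : ℝ} (hs : 0 < s)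
    {g : ℂ → ℂ} (hgQ : g ∈ QsLog s (1 / p')) : MapsInto (Tg g) (Besov p) (Qs s) := by
  intro f hf
  obtain ⟨hg, hK⟩ := mem_QsLog_iff.mp hgQ
  set K := ⨆ a ∈ 𝔻, ENNReal.ofReal (logWeight a ^ (1 / p')) ^ 2 * qsMeasure s g a univ
  have hKa : ∀ a ∈ 𝔻,
      ENNReal.ofReal (logWeight a ^ (1 / p')) ^ 2 * qsMeasure s g a univ ≤ K := fun a ha =>
    le_iSup₂ (f := fun a (_ : a ∈ 𝔻) =>
      ENNReal.ofReal (logWeight a ^ (1 / p')) ^ 2 * qsMeasure s g a univ) a ha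
  have hp'0 : 0 ≤ 1 / p' := one_div_nonneg.mpr hpp.symm.nonneg
  have hp'1 : 1 / p' ≤ 1 := (div_le_one₀ hpp.symm.pos).mpr hpp.symm.lt.le
  have hM : ∀ a ∈ 𝔻, qsMeasure s g a univ ≤ 4 * K := fun a ha =>
    (qsMeasure_univ_le_four_mul_logWeight_rpow_sq s g ha hp'0 hp'1).trans
      (mul_le_mul_right (hKa a ha) 4)
  obtain ⟨C, hC⟩ := exists_enorm_le_mul_logWeight_rpow hpp hf
  have hEnergy : moebiusEnergy (max p 2) f < ⊤ :=
    moebiusEnergy_lt_top hpp.lt.le (le_max_left p 2) (le_max_right p 2) hf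
  refine (Tg_mem_Qs_iff hg hf.1).mpr (lt_of_le_of_lt (b := 2 * (C ^ 2 * K) + 2 * (4 * K +
    carlesonConst (max p 2) s * (4 * K) * moebiusEnergy (max p 2) f)) (iSup₂_le fun a ha => ?_) ?_)
  · calc ∫⁻ z, ‖f z‖ₑ ^ 2 ∂qsMeasure s g a
        ≤ ∫⁻ z, 2 * ‖f a‖ₑ ^ 2 + 2 * ‖f z - f a‖ₑ ^ 2 ∂qsMeasure s g a :=
          lintegral_mono fun z => enorm_sq_le_two_mul_add_two_mul (f z) (f a)
      _ = 2 * (‖f a‖ₑ ^ 2 * qsMeasure s g a univ) +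
          2 * ∫⁻ z, ‖f z - f a‖ₑ ^ 2 ∂qsMeasure s g a := by
          rw [lintegral_add_left measurable_const, lintegral_const, mul_assoc,
            lintegral_const_mul' _ _ ENNReal.ofNat_ne_top]
      _ ≤ _ := by
          have hconst : ‖f a‖ₑ ^ 2 * qsMeasure s g a univ ≤ C ^ 2 * K := by
            refine (mul_le_mul_left (pow_le_pow_left₀ zero_le (hC a ha) 2) _).trans ?_
            rw [mul_pow, mul_assoc]
            exact mul_le_mul_right (hKa a ha) _
          exact add_le_add (mul_le_mul_right hconst _) <| mul_le_mul_right
            (lintegral_enorm_sub_sq_qsMeasure_le (le_max_right p 2) hs hM hg hf.1 ha) _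
  · have hcarleson : carlesonConst (max p 2) s ≠ ⊤ :=
      ENNReal.mul_ne_top ENNReal.ofReal_ne_top ENNReal.ofReal_ne_top
    have := hK.ne
    have := hEnergy.ne
    finiteness

/-! ### Normalised logarithms -/

theorem one_sub_add_abs_le_mul_norm_one_sub_circleMap {ρ θ : ℝ} (h0 : 0 ≤ ρ) (h1 : ρ ≤ 1)
    (hθ : |θ| ≤ π) : (1 - ρ) + |θ| ≤ 8 * ‖1 - circleMap 0 ρ θ‖ := by
  have hsq : ‖1 - circleMap 0 ρ θ‖ ^ 2 = (1 - ρ) ^ 2 + 2 * ρ * (1 - Real.cos θ) := by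
    rw [← Complex.normSq_eq_norm_sq, Complex.normSq_apply, circleMap_zero, sub_re, sub_im,
      re_ofReal_mul, im_ofReal_mul, exp_ofReal_mul_I_re, exp_ofReal_mul_I_im, one_re, one_im]
    linear_combination ρ ^ 2 * Real.sin_sq_add_cos_sq θ
  have hcos : θ ^ 2 / 5 ≤ 1 - Real.cos θ := by
    have hpi : π ^ 2 ≤ 10 := by nlinarith [Real.pi_lt_d2, Real.pi_pos]
    have hquad : θ ^ 2 / 5 ≤ 2 / π ^ 2 * θ ^ 2 := by
      rw [div_mul_eq_mul_div, div_le_div_iff₀ (by norm_num) (by positivity)]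
      nlinarith [sq_nonneg θ]
    linarith [Real.cos_le_one_sub_mul_cos_sq hθ]
  have hθsq : θ ^ 2 ≤ 10 := by
    nlinarith [Real.pi_lt_d2, Real.pi_pos, sq_abs θ, abs_nonneg θ]
  refine abs_le_of_sq_le_sq' ?_ (by positivity) |>.2
  nlinarith [sq_nonneg (1 - ρ - |θ|), sq_abs θ, mul_le_mul_of_nonneg_left hcos h0,
    mul_nonneg (sub_nonneg.mpr h1) (sub_nonneg.mpr hθsq)]

theorem lintegral_comp_abs {h : ℝ → ℝ≥0∞} :
    ∫⁻ x, h |x| = 2 * ∫⁻ x in Ioi 0, h x := by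
  have hpos : ∫⁻ x in Ioi 0, h |x| = ∫⁻ x in Ioi 0, h x :=
    setLIntegral_congr_fun measurableSet_Ioi fun x hx => by rw [abs_of_pos hx]
  have hneg : ∫⁻ x in Iic 0, h |x| = ∫⁻ x in Ioi 0, h |x| := by
    have hflip := (Measure.measurePreserving_neg volume).setLIntegral_comp_preimage_emb
      (Homeomorph.neg ℝ).measurableEmbedding (fun x => h |x|) (Iic 0)
    simp only [abs_neg, neg_preimage, neg_Iic, neg_zero] at hflip
    rw [← hflip, setLIntegral_congr Ioi_ae_eq_Ici]
  rw [← lintegral_add_compl _ (measurableSet_Iic (a := (0 : ℝ))), compl_Iic, hneg, hpos, two_mul]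

theorem lintegral_add_abs_rpow_neg {p : ℝ} (hp : 1 < p) {δ : ℝ} (hδ : 0 < δ) :
    ∫⁻ θ, ENNReal.ofReal ((δ + |θ|) ^ (-p)) = ENNReal.ofReal (2 * (δ ^ (1 - p) / (p - 1))) := by
  have hshift := (measurePreserving_add_left (volume : Measure ℝ) δ).setLIntegral_comp_preimage_emb
    (measurableEmbedding_addLeft δ) (fun x => ENNReal.ofReal (x ^ (-p))) (Ioi δ)
  rw [preimage_const_add_Ioi, sub_self] at hshift
  have hp' : -p < -1 := by linarith
  rw [lintegral_comp_abs (h := fun x => ENNReal.ofReal ((δ + x) ^ (-p))), hshift,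
    ← ofReal_integral_eq_lintegral_ofReal (integrableOn_Ioi_rpow_of_lt hp' hδ)
      (ae_restrict_of_forall_mem measurableSet_Ioi fun x hx =>
        Real.rpow_nonneg (hδ.trans hx).le _),
    integral_Ioi_rpow_of_lt hp' hδ, ENNReal.ofReal_mul zero_le_two, ENNReal.ofReal_ofNat,
    ← neg_sub p 1, neg_add_eq_sub, ← neg_sub p 1, neg_div_neg_eq]

theorem lintegral_norm_one_sub_circleMap_rpow_neg_le {p : ℝ} (hp : 1 < p) {ρ : ℝ} (h0 : 0 ≤ ρ)
    (h1 : ρ < 1) : ∫⁻ θ in Ioo (-π) π, ENNReal.ofReal (‖1 - circleMap 0 ρ θ‖ ^ (-p)) ≤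
      ENNReal.ofReal (8 ^ p * (2 / (p - 1)) * (1 - ρ) ^ (1 - p)) := by
  have hδ : 0 < 1 - ρ := sub_pos.mpr h1
  calc _ ≤ ∫⁻ θ in Ioo (-π) π, ENNReal.ofReal (8 ^ p) *
          ENNReal.ofReal ((1 - ρ + |θ|) ^ (-p)) := by
        refine setLIntegral_mono' measurableSet_Ioo fun θ hθ => ?_
        have hlower := one_sub_add_abs_le_mul_norm_one_sub_circleMap h0 h1.le
          (abs_le.mpr ⟨hθ.1.le, hθ.2.le⟩)
        rw [← ENNReal.ofReal_mul (by positivity)]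
        refine ENNReal.ofReal_le_ofReal ?_
        calc ‖1 - circleMap 0 ρ θ‖ ^ (-p)
            = 8 ^ p * (8 * ‖1 - circleMap 0 ρ θ‖) ^ (-p) := by
              rw [Real.mul_rpow (by norm_num) (norm_nonneg _), ← mul_assoc,
                ← Real.rpow_add (by norm_num), add_neg_cancel, Real.rpow_zero, one_mul]
          _ ≤ _ := mul_le_mul_of_nonneg_left
              (Real.rpow_le_rpow_of_nonpos (by positivity) hlower (by linarith)) (by positivity)
    _ ≤ ENNReal.ofReal (8 ^ p) * ∫⁻ θ, ENNReal.ofReal ((1 - ρ + |θ|) ^ (-p)) := by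
        rw [lintegral_const_mul' _ _ ENNReal.ofReal_ne_top]
        exact mul_le_mul_right (setLIntegral_le_lintegral _ _) _
    _ = _ := by
        rw [lintegral_add_abs_rpow_neg hp hδ, ← ENNReal.ofReal_mul (by positivity)]
        ring_nf

theorem lintegral_one_sub_rpow_Ioo_one {k : ℝ} (hk : -1 < k) {t : ℝ} (ht : t ≤ 1) :
    ∫⁻ r in Ioo t 1, ENNReal.ofReal ((1 - r) ^ k) =
      ENNReal.ofReal ((1 - t) ^ (k + 1) / (k + 1)) := by
  have hint : IntervalIntegrable (fun r : ℝ => (1 - r) ^ k) volume t 1 := by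
    simpa only [sub_sub_cancel, sub_zero] using
      (intervalIntegral.intervalIntegrable_rpow' (a := 1 - t) (b := 0) hk).comp_sub_left 1
  rw [← ofReal_integral_eq_lintegral_ofReal
      ((intervalIntegrable_iff_integrableOn_Ioo_of_le ht).mp hint)
      (ae_restrict_of_forall_mem measurableSet_Ioo fun r hr =>
        Real.rpow_nonneg (sub_nonneg.mpr hr.2.le) _),
    ← integral_Ioc_eq_integral_Ioo, ← intervalIntegral.integral_of_le ht,
    intervalIntegral.integral_comp_sub_left (fun x => x ^ k), integral_rpow (Or.inl hk), sub_self,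
    Real.zero_rpow (by linarith), sub_zero]

section RadialIntegral

variable {p : ℝ} (hp : 1 < p) {t : ℝ} (h0 : 0 ≤ t) (h1 : t < 1)

include hp h0 h1

theorem lintegral_Ioo_zero_one_sub_rpow_mul_one_sub_mul_rpow_le :
    ∫⁻ r in Ioo 0 t, ENNReal.ofReal ((1 - r) ^ (p - 2) * (1 - t * r) ^ (1 - p)) ≤
      ENNReal.ofReal (Real.log (1 / (1 - t))) := by
  rw [← lintegral_one_sub_rpow_neg_one h0 h1]
  refine setLIntegral_mono' measurableSet_Ioo fun r hr => ENNReal.ofReal_le_ofReal ?_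
  have hr' : 0 < 1 - r := by linarith [hr.2]
  calc (1 - r) ^ (p - 2) * (1 - t * r) ^ (1 - p)
      ≤ (1 - r) ^ (p - 2) * (1 - r) ^ (1 - p) :=
        mul_le_mul_of_nonneg_left (Real.rpow_le_rpow_of_nonpos hr' (by nlinarith [hr.1])
          (by linarith)) (by positivity)
    _ = (1 - r) ^ (-1 : ℝ) := by rw [← Real.rpow_add hr']; ring_nf

theorem lintegral_Ioo_one_one_sub_rpow_mul_one_sub_mul_rpow_le :
    ∫⁻ r in Ioo t 1, ENNReal.ofReal ((1 - r) ^ (p - 2) * (1 - t * r) ^ (1 - p)) ≤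
      ENNReal.ofReal (1 / (p - 1)) := by
  have ht : 0 < 1 - t := sub_pos.mpr h1
  calc _ ≤ ∫⁻ r in Ioo t 1, ENNReal.ofReal ((1 - t) ^ (1 - p)) *
        ENNReal.ofReal ((1 - r) ^ (p - 2)) := by
        refine setLIntegral_mono' measurableSet_Ioo fun r hr => ?_
        have hr' : 0 < 1 - r := sub_pos.mpr hr.2
        rw [← ENNReal.ofReal_mul (by positivity), mul_comm]
        exact ENNReal.ofReal_le_ofReal <| mul_le_mul_of_nonneg_right
          (Real.rpow_le_rpow_of_nonpos ht (by nlinarith) (by linarith)) (by positivity)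
    _ = ENNReal.ofReal (1 / (p - 1)) := by
        rw [lintegral_const_mul' _ _ ENNReal.ofReal_ne_top,
          lintegral_one_sub_rpow_Ioo_one (by linarith) h1.le, ← ENNReal.ofReal_mul (by positivity),
          mul_div_assoc', ← Real.rpow_add ht, show 1 - p + (p - 2 + 1) = 0 by ring,
          Real.rpow_zero, show p - 2 + 1 = p - 1 by ring]

theorem lintegral_one_sub_rpow_mul_one_sub_mul_rpow_le :
    ∫⁻ r in Ioo 0 1, ENNReal.ofReal ((1 - r) ^ (p - 2) * (1 - t * r) ^ (1 - p)) ≤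
      ENNReal.ofReal (Real.log (1 / (1 - t)) + 1 / (p - 1)) := by
  have : 0 < p - 1 := sub_pos.mpr hp
  have hlog : 0 ≤ Real.log (1 / (1 - t)) :=
    Real.log_nonneg (one_le_one_div (sub_pos.mpr h1) (sub_le_self 1 h0))
  have hcover : Ioo 0 1 ⊆ Ioo 0 t ∪ Ico t 1 := fun r hr =>
    (lt_or_ge r t).imp (fun h => ⟨hr.1, h⟩) fun h => ⟨h, hr.2⟩
  rw [ENNReal.ofReal_add hlog (by positivity)]
  refine (lintegral_mono_set hcover).trans ((lintegral_union_le _ _ _).trans ?_)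
  rw [setLIntegral_congr Ioo_ae_eq_Ico.symm]
  exact add_le_add (lintegral_Ioo_zero_one_sub_rpow_mul_one_sub_mul_rpow_le hp h0 h1)
    (lintegral_Ioo_one_one_sub_rpow_mul_one_sub_mul_rpow_le hp h0 h1)

end RadialIntegral

theorem lintegral_ball_comp_mul_left {ζ : ℂ} (hζ : ‖ζ‖ = 1) (h : ℂ → ℝ≥0∞) :
    ∫⁻ z in 𝔻, h (ζ * z) ∂dA = ∫⁻ z in 𝔻, h z ∂dA := by
  have hζ0 : ζ ≠ 0 := norm_ne_zero_iff.mp (hζ ▸ one_ne_zero)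
  have himage : (ζ * ·) '' 𝔻 = 𝔻 :=
    (_root_.smul_ball hζ0 (0 : ℂ) 1).trans (by rw [smul_zero, hζ, one_mul])
  have hchange := lintegral_image_dA_eq_lintegral_norm_deriv_sq_mul measurableSet_ball
    (fun z _ => ((hasDerivAt_id z).const_mul ζ).hasDerivWithinAt)
    (mul_right_injective₀ hζ0).injOn h (s := 𝔻)
  simpa only [id, himage, mul_one, hζ, one_pow, ENNReal.ofReal_one, one_mul] using hchange.symm

theorem continuousOn_one_sub_norm_rpow_mul_norm_rpow (p : ℝ) {c : ℂ} (hc : ‖c‖ < 1) :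
    ContinuousOn (fun z => ENNReal.ofReal ((1 - ‖z‖) ^ (p - 2) * ‖1 - c * z‖ ^ (-p))) 𝔻 := by
  refine ENNReal.continuous_ofReal.comp_continuousOn (ContinuousOn.mul ?_ ?_)
  · exact ContinuousOn.rpow_const (by fun_prop) fun z hz => Or.inl (one_sub_norm_pos hz).ne'
  · refine ContinuousOn.rpow_const (by fun_prop) fun z hz => Or.inl (norm_ne_zero_iff.mpr ?_)
    have hc' : conj c ∈ 𝔻 := by rwa [mem_ball_zero_iff, RCLike.norm_conj]
    simpa only [conj_conj] using one_sub_conj_mul_ne_zero hc' hz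

theorem lintegral_norm_one_sub_ofReal_mul_rpow_neg_le {p : ℝ} (hp : 1 < p) {t : ℝ} (h0 : 0 ≤ t)
    (h1 : t < 1) :
    ∫⁻ z in 𝔻, ENNReal.ofReal ((1 - ‖z‖) ^ (p - 2) * ‖1 - t * z‖ ^ (-p)) ∂dA ≤
      ENNReal.ofReal (8 ^ p * (2 / (p - 1)) * (Real.log (1 / (1 - t)) + 1 / (p - 1))) := by
  have : 0 < p - 1 := sub_pos.mpr hp
  have ht : ‖(t : ℂ)‖ < 1 := by rwa [Complex.norm_real, Real.norm_of_nonneg h0]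
  have hpi : (ENNReal.ofReal π)⁻¹ ≤ 1 := by
    rw [ENNReal.inv_le_one, ENNReal.one_le_ofReal]
    linarith [Real.pi_gt_three]
  calc _ ≤ ∫⁻ z in 𝔻, ENNReal.ofReal ((1 - ‖z‖) ^ (p - 2) * ‖1 - t * z‖ ^ (-p)) := by
        rw [setLIntegral_dA]
        exact mul_le_of_le_one_left' hpi
    _ ≤ ∫⁻ r in Ioo 0 1, ENNReal.ofReal (8 ^ p * (2 / (p - 1))) *
          ENNReal.ofReal ((1 - r) ^ (p - 2) * (1 - t * r) ^ (1 - p)) := by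
        rw [setLIntegral_ball_eq_polar (continuousOn_one_sub_norm_rpow_mul_norm_rpow p ht)]
        refine setLIntegral_mono' measurableSet_Ioo fun r hr => ?_
        have hr' : 0 < 1 - r := sub_pos.mpr hr.2
        calc _ ≤ ∫⁻ θ in Ioo (-π) π, ENNReal.ofReal ((1 - r) ^ (p - 2)) *
              ENNReal.ofReal (‖1 - circleMap 0 (t * r) θ‖ ^ (-p)) := by
              refine lintegral_mono fun θ => ?_
              rw [norm_circleMap_zero, abs_of_pos hr.1, circleMap_zero, circleMap_zero, ofReal_mul,
                mul_assoc (t : ℂ), ← ENNReal.ofReal_mul (p := _ ^ _) (by positivity)]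
              exact mul_le_of_le_one_left' (ENNReal.ofReal_le_one.mpr hr.2.le)
          _ ≤ ENNReal.ofReal ((1 - r) ^ (p - 2)) *
              ENNReal.ofReal (8 ^ p * (2 / (p - 1)) * (1 - t * r) ^ (1 - p)) := by
              rw [lintegral_const_mul' _ _ ENNReal.ofReal_ne_top]
              exact mul_le_mul_right (lintegral_norm_one_sub_circleMap_rpow_neg_le hp
                (mul_nonneg h0 hr.1.le) (by nlinarith [hr.1, hr.2])) _
          _ = _ := by
              rw [← ENNReal.ofReal_mul (by positivity), ← ENNReal.ofReal_mul (by positivity)]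
              ring_nf
    _ ≤ _ := by
        rw [lintegral_const_mul' _ _ ENNReal.ofReal_ne_top,
          ENNReal.ofReal_mul (q := _ + _) (by positivity)]
        exact mul_le_mul_right (lintegral_one_sub_rpow_mul_one_sub_mul_rpow_le hp h0 h1) _

theorem exists_lintegral_norm_one_sub_conj_mul_rpow_neg_le {p : ℝ} (hp : 1 < p) :
    ∃ C : ℝ≥0, ∀ a ∈ 𝔻,
      ∫⁻ z in 𝔻, ENNReal.ofReal ((1 - ‖z‖) ^ (p - 2) * ‖1 - conj a * z‖ ^ (-p)) ∂dA ≤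
        C * ENNReal.ofReal (logWeight a) := by
  have : 0 < p - 1 := sub_pos.mpr hp
  refine ⟨Real.toNNReal (8 ^ p * (2 / (p - 1)) * (1 + 2 / (p - 1))), fun a ha => ?_⟩
  obtain ⟨ζ, hζ, hζa⟩ := exists_norm_eq_one_norm_mul_eq (conj a)
  have hrot (z : ℂ) : ENNReal.ofReal ((1 - ‖z‖) ^ (p - 2) * ‖1 - conj a * z‖ ^ (-p)) =
      ENNReal.ofReal ((1 - ‖ζ * z‖) ^ (p - 2) * ‖1 - ‖a‖ * (ζ * z)‖ ^ (-p)) := by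
    rw [norm_mul, hζ, one_mul, ← mul_assoc, ← RCLike.norm_conj a, hζa]
  simp only [hrot]
  rw [lintegral_ball_comp_mul_left hζ
    (fun z => ENNReal.ofReal ((1 - ‖z‖) ^ (p - 2) * ‖1 - ‖a‖ * z‖ ^ (-p)))]
  refine (lintegral_norm_one_sub_ofReal_mul_rpow_neg_le hp (norm_nonneg a)
    (mem_ball_zero_iff.mp ha)).trans ?_
  rw [← ENNReal.ofReal, ← ENNReal.ofReal_mul (by positivity)]
  have ha' := one_sub_norm_pos ha
  have hlog : Real.log (1 / (1 - ‖a‖)) ≤ logWeight a :=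
    Real.log_le_log (by positivity) (by gcongr; norm_num)
  have hconst : 1 / (p - 1) ≤ 2 / (p - 1) * logWeight a := by
    have hL := half_le_logWeight ha
    rw [div_mul_eq_mul_div]
    gcongr
    linarith
  rw [mul_assoc (8 ^ p * _)]
  refine ENNReal.ofReal_le_ofReal (mul_le_mul_of_nonneg_left ?_ (by positivity))
  linarith

/-- The function `z ↦ log (1 / (1 - conj a * z))`, normalised so as to stay bounded in `Besov p` as
`a` varies over the unit disc. -/
noncomputable def logTest (p : ℝ) (a z : ℂ) : ℂ :=
  (logWeight a ^ (-(1 / p)) : ℝ) * -Complex.log (1 - conj a * z)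

theorem norm_conj_mul_le {a : ℂ} (ha : a ∈ 𝔻) (z : ℂ) : ‖conj a * z‖ ≤ ‖z‖ := by
  rw [norm_mul, RCLike.norm_conj]
  exact mul_le_of_le_one_left (norm_nonneg z) (mem_ball_zero_iff.mp ha).le

theorem norm_logTest {a : ℂ} (ha : a ∈ 𝔻) (p : ℝ) (z : ℂ) :
    ‖logTest p a z‖ = logWeight a ^ (-(1 / p)) * ‖Complex.log (1 - conj a * z)‖ := by
  have hL := logWeight_pos ha
  rw [logTest, norm_mul, Complex.norm_real, Real.norm_of_nonneg (by positivity), norm_neg]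

theorem hasDerivAt_logTest (p : ℝ) {a z : ℂ} (ha : a ∈ 𝔻) (hz : z ∈ 𝔻) :
    HasDerivAt (logTest p a)
      ((logWeight a ^ (-(1 / p)) : ℝ) * (conj a / (1 - conj a * z))) z := by
  have hslit : 1 - conj a * z ∈ slitPlane := by
    refine Or.inl ?_
    rw [Complex.sub_re, Complex.one_re, sub_pos]
    exact ((Complex.re_le_norm _).trans (norm_conj_mul_le ha z)).trans_lt (mem_ball_zero_iff.mp hz)
  refine (((hasDerivAt_one_sub_conj_mul a z).clog hslit).neg.const_mul _).congr_deriv ?_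
  rw [neg_div, neg_neg]

theorem holOn_logTest (p : ℝ) {a : ℂ} (ha : a ∈ 𝔻) : HolOn (logTest p a) :=
  fun _ hz => (hasDerivAt_logTest p ha hz).differentiableAt.differentiableWithinAt

theorem exists_besovEnergy_logTest_le {p : ℝ} (hp : 1 < p) :
    ∃ C : ℝ≥0, ∀ a ∈ 𝔻, besovEnergy p (logTest p a) ≤ C := by
  obtain ⟨C, hC⟩ := exists_lintegral_norm_one_sub_conj_mul_rpow_neg_le hp
  refine ⟨C, fun a ha => ?_⟩
  have hL := logWeight_pos ha
  have hp0 : 0 < p := zero_lt_one.trans hp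
  have hderiv : ∀ z ∈ 𝔻, ‖deriv (logTest p a) z‖ ^ p ≤
      (logWeight a)⁻¹ * ‖1 - conj a * z‖ ^ (-p) := fun z hz => by
    rw [(hasDerivAt_logTest p ha hz).deriv, norm_mul, norm_div, RCLike.norm_conj, Complex.norm_real,
      Real.norm_of_nonneg (by positivity), Real.mul_rpow (by positivity) (by positivity),
      Real.div_rpow (norm_nonneg _) (norm_nonneg _), ← Real.rpow_mul hL.le, neg_mul,
      one_div_mul_cancel hp0.ne', Real.rpow_neg_one, Real.rpow_neg (norm_nonneg _), div_eq_mul_inv]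
    have ha1 : ‖a‖ ^ p ≤ 1 :=
      Real.rpow_le_one (norm_nonneg _) (mem_ball_zero_iff.mp ha).le hp0.le
    exact mul_le_mul_of_nonneg_left (mul_le_of_le_one_left (by positivity) ha1) (by positivity)
  calc besovEnergy p (logTest p a)
      ≤ ∫⁻ z in 𝔻, ENNReal.ofReal (logWeight a)⁻¹ *
          ENNReal.ofReal ((1 - ‖z‖) ^ (p - 2) * ‖1 - conj a * z‖ ^ (-p)) ∂dA := by
        refine setLIntegral_mono' measurableSet_ball fun z hz => ?_
        have hz' := one_sub_norm_pos hz
        rw [← ENNReal.ofReal_mul (by positivity), mul_left_comm]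
        exact ENNReal.ofReal_le_ofReal (mul_le_mul_of_nonneg_left (hderiv z hz) (by positivity))
    _ ≤ ENNReal.ofReal (logWeight a)⁻¹ * (C * ENNReal.ofReal (logWeight a)) := by
        rw [lintegral_const_mul' _ _ ENNReal.ofReal_ne_top]
        exact mul_le_mul_right (hC a ha) _
    _ = C := by
        rw [mul_left_comm, ← ENNReal.ofReal_mul (by positivity), inv_mul_cancel₀ hL.ne',
          ENNReal.ofReal_one, mul_one]

theorem norm_log_one_sub_conj_mul_le {a z : ℂ} (ha : a ∈ 𝔻) (hz : z ∈ 𝔻) :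
    ‖Complex.log (1 - conj a * z)‖ ≤ 2 / (1 - ‖z‖) := by
  have hz' := one_sub_norm_pos hz
  have hx := norm_conj_mul_le ha z
  have hlog := Complex.norm_log_one_add_le (z := -(conj a * z))
    (by rw [norm_neg]; linarith)
  rw [norm_neg, ← sub_eq_add_neg] at hlog
  have hinv : (1 - ‖conj a * z‖)⁻¹ ≤ (1 - ‖z‖)⁻¹ := by gcongr
  have hone : 1 ≤ (1 - ‖z‖)⁻¹ := (one_le_inv₀ hz').mpr (by linarith [norm_nonneg z])
  have hsq : ‖conj a * z‖ ^ 2 * (1 - ‖conj a * z‖)⁻¹ ≤ (1 - ‖z‖)⁻¹ :=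
    (mul_le_of_le_one_left (inv_nonneg.mpr (by linarith))
      (pow_le_one₀ (norm_nonneg _) (by linarith))).trans hinv
  rw [div_eq_mul_inv]
  linarith

theorem norm_logTest_le {p : ℝ} (hp : 1 < p) {a z : ℂ} (ha : a ∈ 𝔻) (hz : z ∈ 𝔻) :
    ‖logTest p a z‖ ≤ 4 / (1 - ‖z‖) := by
  have hL := logWeight_pos ha
  have hp0 : 0 < p := zero_lt_one.trans hp
  have hcoef : logWeight a ^ (-(1 / p)) ≤ 2 := by
    rw [Real.rpow_neg hL.le, inv_le_iff_one_le_mul₀ (by positivity)]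
    exact one_le_two_mul_logWeight_rpow ha (by positivity) ((div_le_one hp0).mpr hp.le)
  calc ‖logTest p a z‖ = logWeight a ^ (-(1 / p)) * ‖Complex.log (1 - conj a * z)‖ :=
        norm_logTest ha p z
    _ ≤ 2 * (2 / (1 - ‖z‖)) :=
        mul_le_mul hcoef (norm_log_one_sub_conj_mul_le ha hz) (norm_nonneg _) zero_le_two
    _ = 4 / (1 - ‖z‖) := by ring

theorem logWeight_rpow_le_norm_logTest {p p' : ℝ} (hpp : p.HolderConjugate p') {a z : ℂ}
    (ha : a ∈ 𝔻) (hz : z ∈ 𝔻) (hnear : ‖1 - conj a * z‖ ≤ Real.exp (-(logWeight a / 4))) :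
    logWeight a ^ (1 / p') ≤ 4 * ‖logTest p a z‖ := by
  have hL := logWeight_pos ha
  have hlog : logWeight a ≤ 4 * ‖Complex.log (1 - conj a * z)‖ := by
    have hre : -Real.log ‖1 - conj a * z‖ ≤ ‖Complex.log (1 - conj a * z)‖ := by
      rw [← Complex.log_re]
      exact (neg_le_abs _).trans (Complex.abs_re_le_norm _)
    have := (Real.log_le_iff_le_exp (norm_one_sub_conj_mul_pos ha hz)).mpr hnear
    linarith
  have hexp : 1 / p' = -(1 / p) + 1 := by
    have := hpp.inv_add_inv_eq_one
    simp only [one_div]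
    linarith
  rw [norm_logTest ha, hexp, Real.rpow_add_one hL.ne', mul_left_comm]
  gcongr

/-! ### Superpositions and uniform boundedness -/

/-- The superposition `∑ cᵢ fᵢ` of a family of functions. -/
noncomputable def superpose {ι : Type*} (f : ι → ℂ → ℂ) (c : ι → ℂ) (z : ℂ) : ℂ :=
  ∑' i, c i * f i z

theorem superpose_single {ι : Type*} [DecidableEq ι] (f : ι → ℂ → ℂ) (i : ι) :
    superpose f (Pi.single i 1) = f i := by
  ext z
  rw [superpose, tsum_eq_single i fun j hj => by rw [Pi.single_eq_of_ne hj, zero_mul],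
    Pi.single_eq_same, one_mul]

theorem exists_clm_eq_superpose {ι : Type*} {f : ι → ℂ → ℂ} {z : ℂ} {B : ℝ}
    (hB : ∀ i, ‖f i z‖ ≤ B) :
    ∃ T : lp (fun _ : ι => ℂ) 1 →L[ℂ] ℂ, ∀ c, T c = superpose f c z :=
  ⟨(lp.dualPairing 1 ∞ (fun _ => ContinuousLinearMap.mul ℂ ℂ) (K := 1)
      fun _ => (ContinuousLinearMap.opNorm_mul ℂ ℂ).le).flip
    ⟨fun i => f i z, memℓp_infty ⟨B, forall_mem_range.mpr hB⟩⟩, fun _ => rfl⟩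

theorem exists_clm_forall_mem_ball_eq_superpose {ι : Type*} {f : ι → ℂ → ℂ}
    (hB : ∀ r < 1, ∃ B : ℝ, ∀ i, ∀ z ∈ ball 0 r, ‖f i z‖ ≤ B) :
    ∃ E : ℂ → lp (fun _ : ι => ℂ) 1 →L[ℂ] ℂ, ∀ z ∈ 𝔻, ∀ c, E z c = superpose f c z := by
  have heval (z : ℂ) : ∃ T : lp (fun _ : ι => ℂ) 1 →L[ℂ] ℂ,
      z ∈ 𝔻 → ∀ c, T c = superpose f c z := by
    by_cases hz : z ∈ 𝔻
    · obtain ⟨r, hzr, hr⟩ := exists_between (mem_ball_zero_iff.mp hz)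
      obtain ⟨B, hB⟩ := hB r hr
      obtain ⟨T, hT⟩ := exists_clm_eq_superpose fun i => hB i z (mem_ball_zero_iff.mpr hzr)
      exact ⟨T, fun _ => hT⟩
    · exact ⟨0, fun h => absurd h hz⟩
  choose E hE using heval
  exact ⟨E, hE⟩

theorem tsum_mul_rpow_le {ι : Type*} {p : ℝ} (hp : 1 ≤ p) (w x : ι → ℝ≥0∞) :
    (∑' i, w i * x i) ^ p ≤ (∑' i, w i) ^ (p - 1) * ∑' i, w i * x i ^ p := by
  have hp0 : 0 < p := zero_lt_one.trans_le hp
  have hinv : 0 ≤ 1 - p⁻¹ := sub_nonneg.mpr (inv_le_one_of_one_le₀ hp)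
  have hroot : ∑' i, w i * x i ≤ (∑' i, w i) ^ (1 - p⁻¹) * (∑' i, w i * x i ^ p) ^ p⁻¹ :=
    ENNReal.summable.tsum_le_of_sum_le fun s =>
      (ENNReal.inner_le_weight_mul_Lp_of_nonneg s hp w x).trans <| mul_le_mul'
        (ENNReal.rpow_le_rpow (ENNReal.sum_le_tsum s) hinv)
        (ENNReal.rpow_le_rpow (ENNReal.sum_le_tsum s) (inv_nonneg.mpr hp0.le))
  refine (ENNReal.rpow_le_rpow hroot hp0.le).trans_eq ?_
  rw [ENNReal.mul_rpow_of_nonneg _ _ hp0.le, ← ENNReal.rpow_mul, ENNReal.rpow_inv_rpow hp0.ne',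
    sub_mul, one_mul, inv_mul_cancel₀ hp0.ne']

theorem besovEnergy_eq_lintegral_enorm {p : ℝ} (hp : 0 ≤ p) (f : ℂ → ℂ) : besovEnergy p f =
    ∫⁻ z in 𝔻, ENNReal.ofReal ((1 - ‖z‖) ^ (p - 2)) * ‖deriv f z‖ₑ ^ p ∂dA := by
  refine setLIntegral_congr_fun measurableSet_ball fun z hz => ?_
  have hz' := one_sub_norm_pos hz
  rw [ENNReal.ofReal_mul (by positivity), ← ENNReal.ofReal_rpow_of_nonneg (norm_nonneg _) hp,
    ofReal_norm]

section Superpose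

variable {ι : Type*} {f : ι → ℂ → ℂ} (hf : ∀ i, HolOn (f i))
  (hB : ∀ r < 1, ∃ B : ℝ, ∀ i, ∀ z ∈ ball 0 r, ‖f i z‖ ≤ B)
  {c : ι → ℂ} (hc : Summable fun i => ‖c i‖)

include hf hB hc

theorem hasDerivAt_superpose {z : ℂ} (hz : z ∈ 𝔻) :
    HasDerivAt (superpose f c) (∑' i, c i * deriv (f i) z) z := by
  obtain ⟨r, hzr, hr⟩ := exists_between (mem_ball_zero_iff.mp hz)
  obtain ⟨B, hB⟩ := hB r hr
  have hzr : z ∈ ball 0 r := mem_ball_zero_iff.mpr hzr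
  have hdiff (i : ι) : DifferentiableOn ℂ (fun w => c i * f i w) (ball 0 r) :=
    ((hf i).mono (ball_subset_ball hr.le)).const_mul (c i)
  have hbound : ∀ i, ∀ w ∈ ball 0 r, ‖c i * f i w‖ ≤ ‖c i‖ * B := fun i w hw => by
    rw [norm_mul]
    exact mul_le_mul_of_nonneg_left (hB i w hw) (norm_nonneg _)
  have hsum := Complex.hasSum_deriv_of_summable_norm (hc.mul_right B) hdiff isOpen_ball hbound hzr
  have hderiv (i : ι) : deriv (fun w => c i * f i w) z = c i * deriv (f i) z :=
    deriv_const_mul _ ((hf i).differentiableAt (isOpen_ball.mem_nhds hz))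
  simp only [hderiv] at hsum
  rw [hsum.tsum_eq]
  exact ((Complex.differentiableOn_tsum_of_summable_norm (hc.mul_right B) hdiff isOpen_ball
    hbound).differentiableAt (isOpen_ball.mem_nhds hzr)).hasDerivAt

theorem holOn_superpose : HolOn (superpose f c) :=
  fun _ hz => (hasDerivAt_superpose hf hB hc hz).differentiableAt.differentiableWithinAt

theorem enorm_deriv_superpose_rpow_le {p : ℝ} (hp : 1 ≤ p) {z : ℂ} (hz : z ∈ 𝔻) :
    ‖deriv (superpose f c) z‖ₑ ^ p ≤
      (∑' i, ‖c i‖ₑ) ^ (p - 1) * ∑' i, ‖c i‖ₑ * ‖deriv (f i) z‖ₑ ^ p := by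
  refine .trans (ENNReal.rpow_le_rpow ?_ (zero_le_one.trans hp)) (tsum_mul_rpow_le hp _ _)
  rw [(hasDerivAt_superpose hf hB hc hz).deriv]
  exact enorm_tsum_le_tsum_enorm.trans_eq (tsum_congr fun i => enorm_mul _ _)

theorem besovEnergy_superpose_le [Countable ι] {p : ℝ} (hp : 1 ≤ p) :
    besovEnergy p (superpose f c) ≤
      (∑' i, ‖c i‖ₑ) ^ (p - 1) * ∑' i, ‖c i‖ₑ * besovEnergy p (f i) := by
  have hp0 : 0 ≤ p := zero_le_one.trans hp
  have hfin : (∑' i, ‖c i‖ₑ) ^ (p - 1) ≠ ⊤ := by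
    refine ENNReal.rpow_ne_top_of_nonneg (sub_nonneg.mpr hp) ?_
    simpa only [ofReal_norm] using hc.tsum_ofReal_ne_top
  have hmeas (i : ι) : Measurable fun z : ℂ =>
      ENNReal.ofReal ((1 - ‖z‖) ^ (p - 2)) * ‖deriv (f i) z‖ₑ ^ p := by
    have := measurable_deriv (f i)
    fun_prop
  simp only [besovEnergy_eq_lintegral_enorm hp0]
  calc ∫⁻ z in 𝔻, ENNReal.ofReal ((1 - ‖z‖) ^ (p - 2)) * ‖deriv (superpose f c) z‖ₑ ^ p ∂dA
      ≤ ∫⁻ z in 𝔻, (∑' i, ‖c i‖ₑ) ^ (p - 1) * ∑' i, ‖c i‖ₑ *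
          (ENNReal.ofReal ((1 - ‖z‖) ^ (p - 2)) * ‖deriv (f i) z‖ₑ ^ p) ∂dA := by
        refine setLIntegral_mono' measurableSet_ball fun z hz =>
          (mul_le_mul_right (enorm_deriv_superpose_rpow_le hf hB hc hp hz) _).trans_eq ?_
        rw [mul_left_comm, ← ENNReal.tsum_mul_left]
        simp only [mul_left_comm]
    _ = _ := by
        rw [lintegral_const_mul' _ _ hfin,
          lintegral_tsum fun i => ((hmeas i).const_mul _).aemeasurable]
        simp only [lintegral_const_mul _ (hmeas _)]

theorem superpose_mem_Besov [Countable ι] {p : ℝ} (hp : 1 ≤ p) {C : ℝ≥0}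
    (hC : ∀ i, besovEnergy p (f i) ≤ C) : superpose f c ∈ Besov p := by
  have hc' : ∑' i, ‖c i‖ₑ ≠ ⊤ := by
    simpa only [ofReal_norm] using hc.tsum_ofReal_ne_top
  refine ⟨holOn_superpose hf hB hc, (besovEnergy_superpose_le hf hB hc hp).trans_lt <|
    ENNReal.mul_lt_top (ENNReal.rpow_lt_top_of_nonneg (sub_nonneg.mpr hp) hc') ?_⟩
  calc ∑' i, ‖c i‖ₑ * besovEnergy p (f i) ≤ ∑' i, ‖c i‖ₑ * C :=
        ENNReal.tsum_le_tsum fun i => mul_le_mul_right (hC i) _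
    _ = (∑' i, ‖c i‖ₑ) * C := ENNReal.tsum_mul_right
    _ < ⊤ := ENNReal.mul_lt_top hc'.lt_top ENNReal.coe_lt_top

end Superpose

section UniformBoundedness

variable {α 𝕜 E G ι : Type*} [MeasurableSpace α] [NontriviallyNormedField 𝕜]
  [NormedAddCommGroup E] [NormedSpace 𝕜 E] [NormedAddCommGroup G] [NormedSpace 𝕜 G]
  {T : α → E →L[𝕜] G} {q : ℝ≥0∞}

theorem lowerSemicontinuous_eLpNorm_apply {μ : Measure α}
    (hT : ∀ c, AEStronglyMeasurable (fun x => T x c) μ) :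
    LowerSemicontinuous fun c => eLpNorm (fun x => T x c) q μ := by
  refine lowerSemicontinuous_iff_isClosed_preimage.mpr fun y => IsSeqClosed.isClosed ?_
  intro c d hc hlim
  calc eLpNorm (fun x => T x d) q μ
      ≤ liminf (fun k => eLpNorm (fun x => T x (c k)) q μ) atTop :=
        Lp.eLpNorm_lim_le_liminf_eLpNorm (fun k => hT (c k)) _
          (Eventually.of_forall fun x => ((T x).continuous.tendsto d).comp hlim)
    _ ≤ liminf (fun _ : ℕ => y) atTop := liminf_le_liminf (Eventually.of_forall hc)
    _ = y := liminf_const y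

theorem lowerSemicontinuous_toReal {X : Type*} [TopologicalSpace X] {N : X → ℝ≥0∞}
    (hN : LowerSemicontinuous N) (hfin : ∀ x, N x ≠ ⊤) :
    LowerSemicontinuous fun x => (N x).toReal := by
  intro x y hy
  rcases lt_or_ge y 0 with hy0 | hy0
  · exact Eventually.of_forall fun x' => hy0.trans_le ENNReal.toReal_nonneg
  · filter_upwards [hN x _ ((ENNReal.ofReal_lt_iff_lt_toReal hy0 (hfin x)).mpr hy)] with x' hx'
    exact (ENNReal.ofReal_lt_iff_lt_toReal hy0 (hfin x')).mp hx'

theorem exists_eLpNorm_apply_le_of_iSup_lt_top [CompleteSpace E] (hq : 1 ≤ q) {μ : ι → Measure α}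
    (hT : ∀ i c, AEStronglyMeasurable (fun x => T x c) (μ i))
    (hfin : ∀ c, ⨆ i, eLpNorm (fun x => T x c) q (μ i) < ⊤) :
    ∃ K : ℝ≥0, ∀ c i, eLpNorm (fun x => T x c) q (μ i) ≤ K * ‖c‖ₑ := by
  set N : E → ℝ≥0∞ := fun c => ⨆ i, eLpNorm (fun x => T x c) q (μ i) with hN
  have hadd (c d : E) : N (c + d) ≤ N c + N d := iSup_le fun i => by
    simp only [map_add]
    exact (eLpNorm_add_le (hT i c) (hT i d) hq).trans
      (add_le_add (le_iSup (fun i => eLpNorm (fun x => T x c) q (μ i)) i)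
        (le_iSup (fun i => eLpNorm (fun x => T x d) q (μ i)) i))
  have hsmul (k : 𝕜) (c : E) : N (k • c) = ‖k‖ₑ * N c := by
    simp only [hN, map_smul, ENNReal.mul_iSup]
    exact iSup_congr fun i => eLpNorm_const_smul k (fun x => T x c) q (μ i)
  let P : Seminorm 𝕜 E := Seminorm.of (fun c => (N c).toReal)
    (fun c d => by
      rw [← ENNReal.toReal_add (hfin c).ne (hfin d).ne]
      exact ENNReal.toReal_mono (ENNReal.add_ne_top.mpr ⟨(hfin c).ne, (hfin d).ne⟩) (hadd c d))
    (fun k c => by rw [hsmul, ENNReal.toReal_mul, toReal_enorm])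
  have hP : LowerSemicontinuous P := lowerSemicontinuous_toReal
    (lowerSemicontinuous_iSup fun i => lowerSemicontinuous_eLpNorm_apply (hT i))
    fun c => (hfin c).ne
  obtain ⟨K, hK, hbound⟩ :=
    P.bound_of_continuous_normedSpace (P.continuous_of_lowerSemicontinuous hP)
  refine ⟨K.toNNReal, fun c i => (le_iSup (fun i => eLpNorm (fun x => T x c) q (μ i)) i).trans ?_⟩
  rw [← ENNReal.ofReal, ← ofReal_norm, ← ENNReal.ofReal_mul hK.le]
  exact (ENNReal.le_ofReal_iff_toReal_le (hfin c).ne (by positivity)).mpr (hbound c)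

end UniformBoundedness

theorem lintegral_enorm_sq_eq_eLpNorm_sq (h : ℂ → ℂ) (μ : Measure ℂ) :
    ∫⁻ z, ‖h z‖ₑ ^ 2 ∂μ = eLpNorm h 2 μ ^ 2 := by
  have := eLpNorm_nnreal_pow_eq_lintegral (μ := μ) (f := h) (p := 2) two_ne_zero
  simpa only [NNReal.coe_ofNat, ENNReal.rpow_ofNat, ENNReal.coe_ofNat] using this.symm

theorem iSup_eLpNorm_two_lt_top {ι : Type*} {h : ℂ → ℂ} {μ : ι → Measure ℂ}
    (hfin : ⨆ i, ∫⁻ z, ‖h z‖ₑ ^ 2 ∂μ i < ⊤) : ⨆ i, eLpNorm h 2 (μ i) < ⊤ := by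
  refine lt_of_le_of_lt (iSup_le fun i => ?_)
    (max_lt ENNReal.one_lt_top hfin)
  rcases le_total (eLpNorm h 2 (μ i)) 1 with h1 | h1
  · exact h1.trans (le_max_left _ _)
  · refine .trans ?_ ((le_iSup (fun i => ∫⁻ z, ‖h z‖ₑ ^ 2 ∂μ i) i).trans (le_max_right _ _))
    rw [lintegral_enorm_sq_eq_eLpNorm_sq]
    exact le_self_pow h1 two_ne_zero

theorem exists_lintegral_enorm_sq_qsMeasure_le {p s : ℝ} (hp : 1 ≤ p) {g : ℂ → ℂ} (hg : HolOn g)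
    (hT : MapsInto (Tg g) (Besov p) (Qs s)) {ι : Type*} [Countable ι] {f : ι → ℂ → ℂ}
    (hf : ∀ i, HolOn (f i)) (hB : ∀ r < 1, ∃ B : ℝ, ∀ i, ∀ z ∈ ball 0 r, ‖f i z‖ ≤ B) {C : ℝ≥0}
    (hC : ∀ i, besovEnergy p (f i) ≤ C) :
    ∃ K : ℝ≥0, ∀ i, ∀ a ∈ 𝔻, ∫⁻ z, ‖f i z‖ₑ ^ 2 ∂qsMeasure s g a ≤ K := by
  classical
  obtain ⟨E, hE⟩ := exists_clm_forall_mem_ball_eq_superpose hB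
  have hsum (c : lp (fun _ : ι => ℂ) 1) : Summable fun i => ‖c i‖ :=
    (lp.memℓp c).summable_of_one.norm
  have hhol (c : lp (fun _ : ι => ℂ) 1) : HolOn (superpose f c) := holOn_superpose hf hB (hsum c)
  have hae (a : ℂ) (c) : (fun z => E z c) =ᵐ[qsMeasure s g a] superpose f c :=
    (qsMeasure_absolutelyContinuous s g a).ae_le <|
      (ae_restrict_mem measurableSet_ball).mono fun z hz => hE z hz c
  have hmeas (a : 𝔻) (c) : AEStronglyMeasurable (fun z => E z c) (qsMeasure s g a) :=
    (((hhol c).continuousOn.aestronglyMeasurable measurableSet_ball).mono_ac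
      (qsMeasure_absolutelyContinuous s g a)).congr (hae a c).symm
  have hfin (c) : ⨆ a : 𝔻, eLpNorm (fun z => E z c) 2 (qsMeasure s g a) < ⊤ := by
    have hQs := (Tg_mem_Qs_iff hg (hhol c)).mp (hT _ (superpose_mem_Besov hf hB (hsum c) hp hC))
    simp only [eLpNorm_congr_ae (hae _ c)]
    rw [iSup_subtype'] at hQs
    exact iSup_eLpNorm_two_lt_top hQs
  obtain ⟨K, hK⟩ := exists_eLpNorm_apply_le_of_iSup_lt_top one_le_two hmeas hfin
  refine ⟨K ^ 2, fun i a ha => ?_⟩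
  have hsingle := hK (lp.single 1 i 1) ⟨a, ha⟩
  rw [eLpNorm_congr_ae (hae a _), lp.coeFn_single, superpose_single, ← ofReal_norm,
    lp.norm_single zero_lt_one, norm_one, ENNReal.ofReal_one, mul_one] at hsingle
  rw [lintegral_enorm_sq_eq_eLpNorm_sq, ENNReal.coe_pow]
  exact pow_le_pow_left₀ zero_le hsingle 2

/-! ### Necessity -/

theorem exp_neg_logWeight {a : ℂ} (ha : a ∈ 𝔻) : Real.exp (-logWeight a) = (1 - ‖a‖) / 2 := by
  have ha' := one_sub_norm_pos ha
  rw [logWeight, Real.exp_neg, Real.exp_log (by positivity), inv_div]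

theorem rpow_mul_exp_neg_le {x b θ : ℝ} (hx : 0 ≤ x) (hb : 0 < b) (hθ : 0 < θ) :
    x ^ θ * Real.exp (-(b * x)) ≤ (θ / b) ^ θ := by
  have hexp : b * x / θ ≤ Real.exp (b * x / θ) := by linarith [Real.add_one_le_exp (b * x / θ)]
  rw [Real.exp_neg, ← div_eq_mul_inv, div_le_iff₀ (Real.exp_pos _)]
  calc x ^ θ = (θ / b) ^ θ * (b * x / θ) ^ θ := by
        rw [← Real.mul_rpow (by positivity) (by positivity)]
        congr 1
        field_simp
    _ ≤ (θ / b) ^ θ * Real.exp (b * x / θ) ^ θ := by gcongr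
    _ = (θ / b) ^ θ * Real.exp (b * x) := by rw [← Real.exp_mul, div_mul_cancel₀ _ hθ.ne']

theorem one_sub_norm_phi_sq_le_of_exp_le {a z : ℂ} (ha : a ∈ 𝔻) (hz : z ∈ 𝔻)
    (hfar : Real.exp (-(logWeight a / 4)) ≤ ‖1 - conj a * z‖) :
    1 - ‖phi a z‖ ^ 2 ≤ 4 * Real.exp (-(logWeight a / 2)) * (1 - ‖z‖ ^ 2) := by
  have hz' := one_sub_norm_sq_pos hz
  have hpos := norm_one_sub_conj_mul_pos ha hz
  have hsq : Real.exp (-(logWeight a / 2)) ≤ ‖1 - conj a * z‖ ^ 2 :=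
    calc Real.exp (-(logWeight a / 2)) = Real.exp (-(logWeight a / 4)) ^ 2 := by
          rw [← Real.exp_nat_mul]
          congr 1
          push_cast
          ring
      _ ≤ _ := pow_le_pow_left₀ (Real.exp_pos _).le hfar 2
  have hnum : 1 - ‖a‖ ^ 2 ≤ 4 * Real.exp (-(logWeight a / 2)) * Real.exp (-(logWeight a / 2)) := by
    rw [mul_assoc, ← Real.exp_add, ← neg_add, add_halves, exp_neg_logWeight ha]
    linarith [one_sub_norm_sq_le_two_mul ha]
  rw [one_sub_norm_phi_sq ha hz, div_le_iff₀ (by positivity)]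
  calc (1 - ‖a‖ ^ 2) * (1 - ‖z‖ ^ 2)
      ≤ 4 * Real.exp (-(logWeight a / 2)) * ‖1 - conj a * z‖ ^ 2 * (1 - ‖z‖ ^ 2) := by
        gcongr ?_ * _
        exact hnum.trans (by gcongr)
    _ = _ := by ring

theorem logWeight_rpow_sq_mul_le_of_exp_le {s θ : ℝ} (hs : 0 < s) (hθ : 0 < θ) {a z : ℂ}
    (ha : a ∈ 𝔻) (hz : z ∈ 𝔻) (hfar : Real.exp (-(logWeight a / 4)) ≤ ‖1 - conj a * z‖) :
    (logWeight a ^ θ) ^ 2 * (1 - ‖phi a z‖ ^ 2) ^ s ≤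
      4 ^ s * ((4 * θ / s) ^ θ) ^ 2 * (1 - ‖z‖ ^ 2) ^ s := by
  have hL := (logWeight_pos ha).le
  have hz' := one_sub_norm_sq_pos hz
  have hphi := one_sub_norm_sq_pos (phi_mem_ball ha hz)
  have hexp : Real.exp (-(logWeight a / 2)) ^ s = Real.exp (-(s / 4 * logWeight a)) ^ 2 := by
    rw [← Real.exp_mul, ← Real.exp_nat_mul]
    congr 1
    push_cast
    ring
  calc (logWeight a ^ θ) ^ 2 * (1 - ‖phi a z‖ ^ 2) ^ s
      ≤ (logWeight a ^ θ) ^ 2 * (4 * Real.exp (-(logWeight a / 2)) * (1 - ‖z‖ ^ 2)) ^ s := by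
        gcongr
        exact one_sub_norm_phi_sq_le_of_exp_le ha hz hfar
    _ = 4 ^ s * (logWeight a ^ θ * Real.exp (-(s / 4 * logWeight a))) ^ 2 * (1 - ‖z‖ ^ 2) ^ s := by
        rw [Real.mul_rpow (by positivity) hz'.le, Real.mul_rpow (by positivity) (by positivity),
          hexp]
        ring
    _ ≤ 4 ^ s * ((θ / (s / 4)) ^ θ) ^ 2 * (1 - ‖z‖ ^ 2) ^ s := by
        gcongr
        exact rpow_mul_exp_neg_le hL (by positivity) hθ
    _ = _ := by rw [div_div_eq_mul_div, mul_comm θ]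

theorem logWeight_rpow_sq_mul_le_add {p p' : ℝ} (hpp : p.HolderConjugate p') {s : ℝ} (hs : 0 < s)
    {a z : ℂ} (ha : a ∈ 𝔻) (hz : z ∈ 𝔻) :
    (logWeight a ^ (1 / p')) ^ 2 * (1 - ‖phi a z‖ ^ 2) ^ s ≤
      (1 - ‖phi a z‖ ^ 2) ^ s * (16 * ‖logTest p a z‖ ^ 2) +
        4 ^ s * ((4 * (1 / p') / s) ^ (1 / p')) ^ 2 * (1 - ‖z‖ ^ 2) ^ s := by
  have hp' := one_div_pos.mpr hpp.symm.pos
  have hL := logWeight_pos ha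
  have hphi := one_sub_norm_sq_pos (phi_mem_ball ha hz)
  have hz' := one_sub_norm_sq_pos hz
  -- Near `a / ‖a‖` the test function dominates the weight; far from it, the kernel absorbs it.
  rcases le_total ‖1 - conj a * z‖ (Real.exp (-(logWeight a / 4))) with hnear | hfar
  · refine le_add_of_le_of_nonneg ?_ (by positivity)
    calc (logWeight a ^ (1 / p')) ^ 2 * (1 - ‖phi a z‖ ^ 2) ^ s
        ≤ (4 * ‖logTest p a z‖) ^ 2 * (1 - ‖phi a z‖ ^ 2) ^ s := by
          gcongr
          exact logWeight_rpow_le_norm_logTest hpp ha hz hnear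
      _ = _ := by ring
  · exact le_add_of_nonneg_of_le (by positivity)
      (logWeight_rpow_sq_mul_le_of_exp_le hs hp' ha hz hfar)

theorem exists_logWeight_rpow_sq_mul_qsMeasure_le {p p' : ℝ} (hpp : p.HolderConjugate p') {s : ℝ}
    (hs : 0 < s) (g : ℂ → ℂ) : ∃ C : ℝ≥0, ∀ a ∈ 𝔻,
      ENNReal.ofReal (logWeight a ^ (1 / p')) ^ 2 * qsMeasure s g a univ ≤
        16 * ∫⁻ z, ‖logTest p a z‖ₑ ^ 2 ∂qsMeasure s g a + C * qsMeasure s g 0 univ := by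
  set C : ℝ := 4 ^ s * ((4 * (1 / p') / s) ^ (1 / p')) ^ 2
  have hC : 0 ≤ C := by
    have := hpp.symm.pos
    positivity
  refine ⟨C.toNNReal, fun a ha => ?_⟩
  have hL := logWeight_pos ha
  have hpoint : ∀ z ∈ 𝔻, ENNReal.ofReal (logWeight a ^ (1 / p')) ^ 2 *
      ENNReal.ofReal (‖deriv g z‖ ^ 2 * (1 - ‖phi a z‖ ^ 2) ^ s) ≤
      ENNReal.ofReal (‖deriv g z‖ ^ 2 * (1 - ‖phi a z‖ ^ 2) ^ s) * (16 * ‖logTest p a z‖ₑ ^ 2) +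
        ENNReal.ofReal C * ENNReal.ofReal (‖deriv g z‖ ^ 2 * (1 - ‖phi 0 z‖ ^ 2) ^ s) := by
    intro z hz
    have hphi := one_sub_norm_sq_pos (phi_mem_ball ha hz)
    have hz' := one_sub_norm_sq_pos hz
    rw [norm_phi_zero_left, ← ofReal_norm, ← ENNReal.ofReal_pow (norm_nonneg _),
      ← ENNReal.ofReal_pow (by positivity), ← ENNReal.ofReal_ofNat,
      ← ENNReal.ofReal_mul (by positivity), ← ENNReal.ofReal_mul (by positivity),
      ← ENNReal.ofReal_mul (by positivity),
      ← ENNReal.ofReal_mul hC, ← ENNReal.ofReal_add (by positivity) (by positivity)]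
    refine ENNReal.ofReal_le_ofReal ?_
    linear_combination ‖deriv g z‖ ^ 2 * logWeight_rpow_sq_mul_le_add hpp hs ha hz
  rw [qsMeasure_univ, qsMeasure_univ, ← lintegral_const_mul _ (measurable_qsMeasure_density s g a),
    ← lintegral_const_mul' _ _ ENNReal.ofNat_ne_top, lintegral_qsMeasure,
    ← lintegral_const_mul _ (measurable_qsMeasure_density s g 0),
    ← lintegral_add_right _ ((measurable_qsMeasure_density s g 0).const_mul _)]
  exact setLIntegral_mono' measurableSet_ball hpoint

theorem qsMeasure_zero_univ_lt_top {p s : ℝ} (hp : 0 < p) {g : ℂ → ℂ} (hg : HolOn g)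
    (hT : MapsInto (Tg g) (Besov p) (Qs s)) : qsMeasure s g 0 univ < ⊤ := by
  have hone : HolOn fun _ => 1 := differentiableOn_const 1
  have hmem : (fun _ => 1) ∈ Besov p := by
    refine ⟨hone, ?_⟩
    simp only [deriv_const, norm_zero, Real.zero_rpow hp.ne', mul_zero, ENNReal.ofReal_zero,
      lintegral_zero, ENNReal.zero_lt_top]
  refine lt_of_le_of_lt (le_iSup₂_of_le 0 (mem_ball_self one_pos) ?_)
    ((Tg_mem_Qs_iff hg hone).mp (hT _ hmem))
  simp only [enorm_one, one_pow, lintegral_one, le_refl]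

theorem mem_QsLog_of_mapsInto_Tg {p p' : ℝ} (hpp : p.HolderConjugate p') {s : ℝ} (hs : 0 < s)
    {g : ℂ → ℂ} (hg : HolOn g) (hT : MapsInto (Tg g) (Besov p) (Qs s)) :
    g ∈ QsLog s (1 / p') := by
  obtain ⟨C, hC⟩ := exists_logWeight_rpow_sq_mul_qsMeasure_le hpp hs g
  have h0 := qsMeasure_zero_univ_lt_top hpp.pos hg hT
  refine mem_QsLog_iff.mpr ⟨hg, lt_top_iff_ne_top.mpr fun htop => ?_⟩
  have hlarge (n : ℕ) : ∃ a ∈ 𝔻,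
      n < ENNReal.ofReal (logWeight a ^ (1 / p')) ^ 2 * qsMeasure s g a univ := by
    simpa only [lt_iSup_iff, exists_prop] using (ENNReal.natCast_lt_top n).trans_eq htop.symm
  choose a ha hlt using hlarge
  have hB : ∀ r < 1, ∃ B : ℝ, ∀ n, ∀ z ∈ ball 0 r, ‖logTest p (a n) z‖ ≤ B := fun r hr =>
    ⟨4 / (1 - r), fun n z hz => (norm_logTest_le hpp.lt (ha n) (ball_subset_ball hr.le hz)).trans
      (by have := sub_pos.mpr hr; have := (mem_ball_zero_iff.mp hz).le; gcongr)⟩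
  obtain ⟨D, hD⟩ := exists_besovEnergy_logTest_le hpp.lt
  obtain ⟨K, hK⟩ := exists_lintegral_enorm_sq_qsMeasure_le hpp.lt.le hg hT
    (fun n => holOn_logTest p (ha n)) hB fun n => hD _ (ha n)
  obtain ⟨n, hn⟩ := ENNReal.exists_nat_gt (r := 16 * K + C * qsMeasure s g 0 univ)
    (by have := h0.ne; finiteness)
  refine (hn.trans (hlt n)).not_ge ((hC _ (ha n)).trans ?_)
  gcongr
  exact hK n _ (ha n)

theorem stmt7_general {p p' s : ℝ} (hpp : p.HolderConjugate p') (hs : 0 < s) {g : ℂ → ℂ}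
    (hg : HolOn g) : MapsInto (Tg g) (Besov p) (Qs s) ↔ g ∈ QsLog s (1 / p') :=
  ⟨mem_QsLog_of_mapsInto_Tg hpp hs hg, mapsInto_Tg_of_mem_QsLog hpp hs⟩

/-- For `1 < p < ∞` with conjugate exponent `p'` and `g` holomorphic on the
unit disc, `T_g` maps `Bᵖ` into `Q₁ (= BMOA)` iff `g ∈ Q_{1,log,1/p'}`. -/
theorem stmt7 (p p' : ℝ) (hp : 1 < p) (hpp' : 1 / p + 1 / p' = 1)
    (g : ℂ → ℂ) (hg : HolOn g) :
    MapsInto (Tg g) (Besov p) (Qs 1) ↔ g ∈ QsLog 1 (1 / p') :=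
  stmt7_general (Real.holderConjugate_iff.mpr ⟨hp, by simpa only [one_div] using hpp'⟩) one_pos hg
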